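/- arXiv:1805.05678 — 6 statements merged into one kernel-verified Lean document; each statement's English description precedes it below -/
import Mathlib

section
/- Let p be an odd prime, k a field of characteristic p, and σ the k-automorphism of the rational function field k(y₁,…,y_{p-1}) given by σ(y₁) = y₂, …, σ(y_{p-2}) = y_{p-1}, σ(y_{p-1}) = 1 − (y₁ + ⋯ + y_{p-1}). Then the fixed field k(y₁,…,y_{p-1})^⟨σ⟩ is purely transcendental over k. -/
set_option maxHeartbeats 1000000
set_option synthInstance.maxHeartbeats 400000

/-- A field extension `F` of `k` is `k`-rational (purely transcendental over `k`)
if it is `k`-isomorphic to a rational function field in finitely many variables. -/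
def IsKRational (k F : Type*) [Field k] [Field F] [Algebra k F] : Prop :=
  ∃ n : ℕ, Nonempty (F ≃ₐ[k] FractionRing (MvPolynomial (Fin n) k))

open Polynomial in
lemma aux_fixed {k L : Type*} [Field k] [Field L] [Algebra k L] (p : ℕ) (hp : p.Prime) [CharP L p]
    (σ : L ≃ₐ[k] L) (E : IntermediateField k L) (hE : ∀ x ∈ E, σ x = x)
    (t : L) (ht : σ t = t + 1) (htE : t ^ p - t ∈ E)
    (htop : IntermediateField.adjoin E {t} = ⊤) (x : L) (hx : σ x = x) : x ∈ E := by
  have := Fact.mk hp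
  set u : E := ⟨t ^ p - t, htE⟩ with hu
  set f : E[X] := X ^ p - (X + C u) with hf
  have hdeg : (X + C u : E[X]).degree < (p : ℕ) := by
    rw [degree_X_add_C]; exact_mod_cast hp.one_lt
  have hmonic : f.Monic := monic_X_pow_sub hdeg
  have hfd : f.degree = p := by
    rw [hf, degree_sub_eq_left_of_degree_lt (by rw [degree_X_pow]; exact hdeg), degree_X_pow]
  have hroot : aeval t f = 0 := by
    simp [hf, hu]
  have hint : IsIntegral E t := ⟨f, hmonic, by rw [← aeval_def]; exact hroot⟩
  have hmem : x ∈ IntermediateField.adjoin E {t} := by rw [htop]; trivial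
  rw [← IntermediateField.mem_toSubalgebra,
    IntermediateField.adjoin_simple_toSubalgebra_of_isAlgebraic hint.isAlgebraic,
    Algebra.adjoin_singleton_eq_range_aeval] at hmem
  obtain ⟨g, hg⟩ := hmem
  replace hg : aeval t g = x := hg
  set q := g %ₘ f with hq
  have hqx : aeval t q = x := by rw [hq, aeval_modByMonic_eq_self_of_root hroot, hg]
  have hqd : q.degree < p := by rw [← hfd]; exact degree_modByMonic_lt _ hmonic
  have hσq : ∀ s : L, σ (aeval s q) = aeval (σ s) q := by
    intro s
    rw [aeval_eq_sum_range, aeval_eq_sum_range, map_sum]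
    refine Finset.sum_congr rfl fun i _ => ?_
    rw [Algebra.smul_def, Algebra.smul_def, map_mul, map_pow]
    congr 1
    exact hE _ (q.coeff i).2
  have hi : ∀ i : ℕ, aeval (t + i) q = x := by
    intro i
    induction i with
    | zero => simpa using hqx
    | succ n ih =>
      have := hσq (t + n)
      rw [ih, hx, map_add, map_natCast, ht] at this
      rw [this]; push_cast; ring_nf
  set Q : L[X] := q.map (algebraMap E L) - C x with hQ
  have hQ0 : Q = 0 := by
    refine eq_zero_of_natDegree_lt_card_of_eval_eq_zero Q (ι := Fin p) (f := fun i => t + (i : ℕ)) ?_ ?_ ?_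
    · intro i j hij
      have h1 : ((i : ℕ) : L) = (j : ℕ) := by simpa using hij
      rw [CharP.cast_eq_iff_mod_eq L p, Nat.mod_eq_of_lt i.2, Nat.mod_eq_of_lt j.2] at h1
      exact Fin.ext h1
    · intro i
      have := hi i
      simp [hQ, eval_map_algebraMap, this]
    · rw [Fintype.card_fin]
      by_cases hQz : Q = 0
      · rw [hQz, natDegree_zero]; exact hp.pos
      rw [natDegree_lt_iff_degree_lt hQz]
      refine (degree_sub_le _ _).trans_lt (max_lt ?_ ?_)
      · rw [degree_map]; exact hqd
      · exact degree_C_le.trans_lt (by exact_mod_cast hp.pos)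
  have h0 := congrArg (fun P => coeff P 0) hQ0
  simp only [hQ, coeff_sub, coeff_map, coeff_C_zero, coeff_zero] at h0
  rw [← sub_eq_zero.mp h0]
  exact (q.coeff 0).2

lemma aux_gen {k L : Type*} [Field k] [Field L] [Algebra k L] (p : ℕ) (hp : p.Prime) [CharP L p]
    (Y : ℕ → L) (M : IntermediateField k L) (t : L) (ht : t ∈ M)
    (hw : ∀ m < p, ∑ i ∈ Finset.range p, (t + i) ^ m * Y i ∈ M) (j : ℕ) (hj : j < p) :
    Y j ∈ M := by
  have := Fact.mk hp
  have hp1 := hp.one_lt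
  have key : Y j = ∑ i ∈ Finset.range p, (t + i) ^ 0 * Y i
      - ∑ i ∈ Finset.range p, ((t + i) + (-(t + j))) ^ (p - 1) * Y i := by
    rw [← Finset.sum_sub_distrib, Finset.sum_eq_single j]
    · rw [add_neg_cancel, zero_pow (by omega)]; ring
    · intro i hi hij
      have hne : ((i : L) - j) ≠ 0 := by
        intro h
        have h1 := sub_eq_zero.mp h
        rw [CharP.cast_eq_iff_mod_eq L p, Nat.mod_eq_of_lt (Finset.mem_range.mp hi), Nat.mod_eq_of_lt hj] at h1
        exact hij h1
      have h1 : ((i : L) - j) ^ p = (i : L) - j := by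
        have := sub_pow_char (p := p) (i : L) (j : L)
        rw [this, ← frobenius_def, ← frobenius_def, map_natCast, map_natCast]
      have h2 : ((i : L) - j) ^ (p - 1) = 1 := by
        have h3 : ((i : L) - j) ^ (p - 1) * ((i : L) - j) = 1 * ((i : L) - j) := by
          rw [← pow_succ, Nat.sub_add_cancel hp.one_le, h1, one_mul]
        exact mul_right_cancel₀ hne h3
      have h4 : (t + i) + (-(t + j)) = (i : L) - j := by ring
      rw [h4, h2]; ring
    · intro h; exact absurd (Finset.mem_range.mpr hj) h
  rw [key]
  refine sub_mem (hw 0 hp.pos) ?_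
  have : ∑ i ∈ Finset.range p, ((t + i) + (-(t + j))) ^ (p - 1) * Y i
      = ∑ m ∈ Finset.range (p - 1 + 1), ((-(t + j)) ^ (p - 1 - m) * ((p - 1).choose m : L)) *
        ∑ i ∈ Finset.range p, (t + i) ^ m * Y i := by
    simp_rw [add_pow (t + _), Finset.sum_mul, Finset.mul_sum]
    rw [Finset.sum_comm]
    refine Finset.sum_congr rfl fun m _ => Finset.sum_congr rfl fun i _ => ?_
    ring
  rw [this]
  refine sum_mem fun m hm => mul_mem (mul_mem (pow_mem (neg_mem (add_mem ht (natCast_mem _ _))) _)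
    (natCast_mem _ _)) (hw m ?_)
  have := Finset.mem_range.mp hm
  omega

lemma aux_shift {k L : Type*} [Field k] [Field L] [Algebra k L] (p : ℕ)
    (σ : L ≃ₐ[k] L) (Y : ℕ → L) (hY : ∀ i < p, σ (Y i) = Y (i + 1)) (hYp : Y p = Y 0)
    (g : ℕ → L) (hg : ∀ i, σ (g i) = g (i + 1)) (hgp : g p = g 0) :
    σ (∑ i ∈ Finset.range p, g i * Y i) = ∑ i ∈ Finset.range p, g i * Y i := by
  have h1 : σ (∑ i ∈ Finset.range p, g i * Y i)
      = ∑ i ∈ Finset.range p, g (i + 1) * Y (i + 1) := by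
    rw [map_sum]
    refine Finset.sum_congr rfl fun i hi => ?_
    rw [map_mul, hg, hY i (Finset.mem_range.mp hi)]
  have h2 := Finset.sum_range_succ (fun i => g i * Y i) p
  have h3 := Finset.sum_range_succ' (fun i => g i * Y i) p
  rw [h1]
  rw [h2, hgp, hYp] at h3
  exact (add_right_cancel h3).symm

lemma aux_main {k L : Type*} [Field k] [Field L] [Algebra k L] (p : ℕ) (hp : p.Prime) (hp2 : 2 < p)
    [CharP L p]
    (σ : L ≃ₐ[k] L) (Y : ℕ → L) (hY : ∀ i < p, σ (Y i) = Y (i + 1)) (hYp : Y p = Y 0)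
    (hsum : ∑ i ∈ Finset.range p, Y i = 1)
    (hgen : ∀ M : IntermediateField k L, (∀ i < p, Y i ∈ M) → M = ⊤)
    (z : Fin (p - 1) → L) (hz : IsTranscendenceBasis k z) :
    IsKRational k (IntermediateField.fixedField (Subgroup.zpowers σ)) := by
  have := Fact.mk hp
  set t : L := - ∑ i ∈ Finset.range p, (i : L) * Y i with htdef
  have hcp : ((p : ℕ) : L) = 0 := CharP.cast_eq_zero L p
  have ht : σ t = t + 1 := by
    have h1 : σ t = - ∑ i ∈ Finset.range p, (((i + 1 : ℕ) : L) * Y (i + 1) - Y (i + 1)) := by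
      rw [htdef, map_neg, map_sum]
      congr 1
      refine Finset.sum_congr rfl fun i hi => ?_
      rw [map_mul, map_natCast, hY i (Finset.mem_range.mp hi)]; push_cast; ring
    have h2 := Finset.sum_range_succ (fun i => (i : L) * Y i) p
    have h3 := Finset.sum_range_succ' (fun i => (i : L) * Y i) p
    have h4 := Finset.sum_range_succ Y p
    have h5 := Finset.sum_range_succ' Y p
    rw [h1, Finset.sum_sub_distrib]
    rw [hcp] at h2
    simp only [Nat.cast_zero] at h3
    rw [hYp] at h4
    linear_combination h3 - h2 - h5 + h4 + hsum
  set w : ℕ → L := fun m => ∑ i ∈ Finset.range p, (t + i) ^ m * Y i with hwdef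
  have hw0 : w 0 = 1 := by simp [hwdef, hsum]
  have hw1 : w 1 = 0 := by
    simp only [hwdef, pow_one, add_mul, Finset.sum_add_distrib, ← Finset.mul_sum, hsum]
    rw [htdef]; ring
  have hwσ : ∀ m, σ (w m) = w m := by
    intro m
    refine aux_shift p σ Y hY hYp (fun i => (t + i) ^ m) ?_ ?_
    · intro i
      simp only [map_pow, map_add, map_natCast, ht]
      push_cast; ring
    · simp [hcp]
  have hu : σ (t ^ p - t) = t ^ p - t := by
    rw [map_sub, map_pow, ht, add_pow_char, one_pow]; ring
  set a : Fin (p - 1) → L := fun i => if (i : ℕ) = 0 then t ^ p - t else w (i + 1) with hadef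
  have haσ : ∀ i, σ (a i) = a i := by
    intro i
    simp only [hadef]
    split_ifs
    · exact hu
    · exact hwσ _
  set E := IntermediateField.adjoin k (Set.range a) with hEdef
  have hle : E ≤ IntermediateField.fixedField (Subgroup.zpowers σ) := by
    rw [hEdef, IntermediateField.adjoin_le_iff]
    rintro _ ⟨i, rfl⟩
    rintro ⟨τ, hτ⟩
    have : Subgroup.zpowers σ ≤ MulAction.stabilizer (L ≃ₐ[k] L) (a i) := by
      rw [Subgroup.zpowers_le]; exact haσ i
    exact this hτ
  have hfix : ∀ x ∈ IntermediateField.fixedField (Subgroup.zpowers σ), σ x = x :=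
    fun x hx => hx ⟨σ, Subgroup.mem_zpowers σ⟩
  have haE : ∀ i, a i ∈ E := fun i => IntermediateField.subset_adjoin _ _ ⟨i, rfl⟩
  have huE : t ^ p - t ∈ E := by
    have := haE ⟨0, by omega⟩
    simpa [hadef] using this
  have hwE : ∀ m < p, w m ∈ E := by
    intro m hm
    rcases m with _ | _ | m
    · rw [hw0]; exact one_mem _
    · rw [hw1]; exact zero_mem _
    · have := haE ⟨m + 1, by omega⟩
      simpa [hadef] using this
  have htop : IntermediateField.adjoin E {t} = ⊤ := by
    have h1 : (IntermediateField.adjoin E {t}).restrictScalars k = ⊤ := by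
      apply hgen
      intro i hi
      refine aux_gen p hp Y _ t ?_ ?_ i hi
      · exact IntermediateField.mem_adjoin_simple_self E t
      · intro m hm
        exact (IntermediateField.adjoin E {t}).algebraMap_mem ⟨w m, hwE m hm⟩
    rw [eq_top_iff]
    intro x _
    have : x ∈ (IntermediateField.adjoin E {t}).restrictScalars k := by rw [h1]; trivial
    exact this
  have hEF : IntermediateField.fixedField (Subgroup.zpowers σ) = E := by
    refine le_antisymm ?_ hle
    intro x hx
    exact aux_fixed p hp σ E (fun x hx => hfix x (hle hx)) t ht huE htop x (hfix x hx)
  have hint : IsIntegral E t := by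
    refine ⟨Polynomial.X ^ p - (Polynomial.X + Polynomial.C ⟨t ^ p - t, huE⟩), ?_, ?_⟩
    · apply Polynomial.monic_X_pow_sub
      rw [Polynomial.degree_X_add_C]; exact_mod_cast hp.one_lt
    · rw [← Polynomial.aeval_def]; simp
  have halgE : Algebra.IsAlgebraic E L := by
    have h1 := IntermediateField.isAlgebraic_adjoin_simple hint
    rw [htop] at h1
    exact (IntermediateField.topEquiv (F := E) (E := L)).isAlgebraic
  have halg : Algebra.IsAlgebraic (Algebra.adjoin k (Set.range a)) L := by
    exact IntermediateField.isAlgebraic_adjoin_iff_top.mp halgE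
  have hind : IsTranscendenceBasis k a := by
    apply Algebra.IsAlgebraic.isTranscendenceBasis_of_lift_le_trdeg_of_finite
    exact hz.lift_cardinalMk_eq_trdeg.le
  rw [hEF]
  exact ⟨p - 1, ⟨hind.1.aevalEquivField.symm⟩⟩

/-- for `p` an odd prime and `char k = p`, the fixed field of the
automorphism `σ : y₁ ↦ y₂ ↦ ⋯ ↦ y_{p-1} ↦ 1 - (y₁ + ⋯ + y_{p-1})` of
`k(y₁,…,y_{p-1})` is purely transcendental over `k`. -/
theorem stmt2 (k : Type*) [Field k] (p : ℕ) (hp : p.Prime) (hodd : Odd p) [CharP k p]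
    (y : Fin (p - 1) → FractionRing (MvPolynomial (Fin (p - 1)) k))
    (hy : ∀ i, y i = algebraMap (MvPolynomial (Fin (p - 1)) k)
      (FractionRing (MvPolynomial (Fin (p - 1)) k)) (MvPolynomial.X i))
    (σ : FractionRing (MvPolynomial (Fin (p - 1)) k) ≃ₐ[k]
         FractionRing (MvPolynomial (Fin (p - 1)) k))
    (hσ : ∀ i j : Fin (p - 1), (j : ℕ) = (i : ℕ) + 1 → σ (y i) = y j)
    (hσlast : ∀ i : Fin (p - 1), (i : ℕ) = p - 2 → σ (y i) = 1 - ∑ j, y j) :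
    IsKRational k (IntermediateField.fixedField (Subgroup.zpowers σ)) := by
  have hp2 : 2 < p := by
    have := hp.two_le
    rcases hodd with ⟨m, hm⟩
    omega
  have : CharP (FractionRing (MvPolynomial (Fin (p - 1)) k)) p :=
    charP_of_injective_algebraMap (algebraMap k _).injective p
  set Y : ℕ → FractionRing (MvPolynomial (Fin (p - 1)) k) := fun n =>
    if h : n < p - 1 then y ⟨n, h⟩ else if n = p - 1 then 1 - ∑ j, y j else y ⟨0, by omega⟩ with hYdef
  have hYlt : ∀ n (h : n < p - 1), Y n = y ⟨n, h⟩ := fun n h => by simp [hYdef, h]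
  have hYlast : Y (p - 1) = 1 - ∑ j, y j := by simp [hYdef]
  have hYp : Y p = Y 0 := by
    rw [hYlt 0 (by omega)]
    simp only [hYdef]
    rw [dif_neg (by omega), if_neg (by omega)]
  have hfin : ∑ j, y j = ∑ i ∈ Finset.range (p - 1), Y i := by
    rw [Finset.sum_range]
    exact Finset.sum_congr rfl fun i _ => (hYlt i i.2).symm
  have hsum : ∑ i ∈ Finset.range p, Y i = 1 := by
    have h := Finset.sum_range_succ Y (p - 1)
    rw [Nat.sub_add_cancel hp.one_le] at h
    rw [h, hYlast, hfin]; ring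
  have hY1 : ∀ i < p - 1, σ (Y i) = Y (i + 1) := by
    intro i hi
    rw [hYlt i hi]
    by_cases h : i + 1 < p - 1
    · rw [hYlt _ h]; exact hσ _ _ rfl
    · have h' : i + 1 = p - 1 := by omega
      rw [h', hYlast]
      apply hσlast
      show i = p - 2
      omega
  have hY2 : ∀ i < p, σ (Y i) = Y (i + 1) := by
    intro i hi
    by_cases h : i < p - 1
    · exact hY1 i h
    · have h' : i = p - 1 := by omega
      subst h'
      rw [hYlast, hfin, map_sub, map_one, map_sum, Nat.sub_add_cancel hp.one_le, hYp,
        Finset.sum_congr rfl (fun i hi => hY1 i (Finset.mem_range.mp hi))]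
      have h := Finset.sum_range_succ' Y (p - 1)
      rw [Nat.sub_add_cancel hp.one_le, hsum] at h
      rw [h]; ring
  refine aux_main p hp hp2 σ Y hY2 hYp hsum ?_ y ?_
  · intro M hM
    have hyM : ∀ i, y i ∈ M := fun i => by
      have := hM i (by omega)
      rwa [hYlt i i.2] at this
    have hpoly : ∀ f : MvPolynomial (Fin (p - 1)) k, algebraMap _
        (FractionRing (MvPolynomial (Fin (p - 1)) k)) f ∈ M := by
      intro f
      induction f using MvPolynomial.induction_on with
      | C c =>
        have := M.algebraMap_mem c
        rwa [IsScalarTower.algebraMap_apply k (MvPolynomial (Fin (p - 1)) k)] at this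
      | add f g hf hg => rw [map_add]; exact add_mem hf hg
      | mul_X f i hf => rw [map_mul, ← hy]; exact mul_mem hf (hyM i)
    rw [eq_top_iff]
    intro x _
    obtain ⟨f, g, _, rfl⟩ := IsFractionRing.div_surjective (A := MvPolynomial (Fin (p - 1)) k) x
    exact div_mem (hpoly f) (hpoly g)
  · have : Algebra.IsAlgebraic (MvPolynomial (Fin (p - 1)) k)
        (FractionRing (MvPolynomial (Fin (p - 1)) k)) :=
      IsLocalization.isAlgebraic _ (nonZeroDivisors (MvPolynomial (Fin (p - 1)) k))
    have h := (IsTranscendenceBasis.mvPolynomial (Fin (p - 1)) k).algebraMap_comp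
      (A := FractionRing (MvPolynomial (Fin (p - 1)) k))
    have : y = algebraMap _ _ ∘ MvPolynomial.X := funext hy
    rw [this]; exact h
end

section
/- Let p be an odd prime, k a field of characteristic different from p, and σ the k-automorphism of k(y₁,…,y_{p-1}) defined by σ(y₁)=y₂, …, σ(y_{p-2})=y_{p-1}, σ(y_{p-1}) = 1 − Σ_{i=1}^{p-1} y_i. Let z be transcendental over k(y₁,…,y_{p-1})^⟨σ⟩, with σ extended by σ(z)=z. Then k(y₁,…,y_{p-1})^⟨σ⟩(z) is k-isomorphic to k(C_p), the fixed field of the cyclic group of order p acting by cyclically permuting the variables of k(x₀,…,x_{p-1}). -/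
set_option maxHeartbeats 1000000
set_option synthInstance.maxHeartbeats 1000000

open Polynomial in
/-- evaluation as a `k`-algebra map -/
noncomputable def aux_ev {k K L : Type*} [Field k] [Field K] [Field L] [Algebra k K] [Algebra k L]
    (φ : K →ₐ[k] L) (s : L) : K[X] →ₐ[k] L :=
  { eval₂RingHom (φ : K →+* L) s with
    commutes' := fun r => by
      change eval₂ (φ : K →+* L) s (algebraMap k K[X] r) = _
      rw [Polynomial.algebraMap_apply, Polynomial.eval₂_C]
      simp }

theorem aux_mem_fixed {k L : Type*} [Field k] [Field L] [Algebra k L] (τ : L ≃ₐ[k] L) (a : L) :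
    a ∈ IntermediateField.fixedField (Subgroup.zpowers τ) ↔ τ a = a := by
  rw [IntermediateField.mem_fixedField_iff]
  constructor
  · intro h
    exact h τ (Subgroup.mem_zpowers τ)
  · intro h f hf
    have h1 : Subgroup.zpowers τ ≤ MulAction.stabilizer (L ≃ₐ[k] L) a := by
      rw [Subgroup.zpowers_le]
      exact h
    exact h1 hf

open Polynomial in
theorem aux_coeff {K : Type*} [Field K] (σ : K →+* K) (a b : K[X]) (hb : b.Monic)
    (hc : IsCoprime a b) (h : a.map σ * b = a * b.map σ) : a.map σ = a ∧ b.map σ = b := by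
  have h1 : b ∣ b.map σ := hc.symm.dvd_of_dvd_mul_left ⟨a.map σ, by rw [← h]; ring⟩
  have h2 : b.map σ = b := by
    refine (Polynomial.eq_of_monic_of_dvd_of_natDegree_le hb (hb.map σ) h1 ?_)
    rw [hb.natDegree_map]
  refine ⟨?_, h2⟩
  rw [h2] at h
  exact mul_right_cancel₀ hb.ne_zero h

open Polynomial in
theorem aux_main_s4 {k K L : Type*} [Field k] [Field K] [Field L] [Algebra k K] [Algebra k L]
    (φ : K →ₐ[k] L) (s : L) (σ : K ≃ₐ[k] K) (τ : L ≃ₐ[k] L)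
    (hφ : ∀ a, τ (φ a) = φ (σ a)) (hs : τ s = s)
    (hinj : Function.Injective (eval₂RingHom (φ : K →+* L) s))
    (hsurj : ∀ z : L, ∃ a b : K[X], b ≠ 0 ∧
      z = eval₂ (φ : K →+* L) s a / eval₂ (φ : K →+* L) s b) :
    Nonempty
      (FractionRing (Polynomial (IntermediateField.fixedField (Subgroup.zpowers σ))) ≃ₐ[k]
       IntermediateField.fixedField (Subgroup.zpowers τ)) := by
  set F := IntermediateField.fixedField (Subgroup.zpowers σ) with hF
  set M := IntermediateField.fixedField (Subgroup.zpowers τ) with hM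
  let Ψ : F[X] →ₐ[k] L := aux_ev (φ.comp F.val) s
  have hΨ : ∀ P : F[X], Ψ P = eval₂ (φ : K →+* L) s (P.map (algebraMap F K)) := by
    intro P
    rw [Polynomial.eval₂_map]
    rfl
  have hτΦ : ∀ P : K[X], τ (eval₂ (φ : K →+* L) s P)
      = eval₂ (φ : K →+* L) s (P.map (σ : K →+* K)) := by
    intro P
    rw [Polynomial.eval₂_map]
    have := Polynomial.hom_eval₂ P (φ : K →+* L) (τ : L →+* L) s
    simp only [RingHom.coe_coe] at this
    rw [this, hs]
    congr 1
    ext a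
    simpa using hφ a
  have hΨinj : Function.Injective Ψ := by
    intro P Q h
    rw [hΨ, hΨ] at h
    exact Polynomial.map_injective _ (algebraMap F K).injective (hinj h)
  let e : FractionRing F[X] →ₐ[k] L := IsFractionRing.liftAlgHom hΨinj
  have he : ∀ P : F[X], e (algebraMap _ _ P) = Ψ P := fun P =>
    IsFractionRing.lift_algebraMap hΨinj P
  have hΨM : ∀ P : F[X], τ (Ψ P) = Ψ P := by
    intro P
    rw [hΨ, hτΦ, Polynomial.map_map]
    congr 2
    ext a
    exact (aux_mem_fixed σ _).1 a.2
  have heM : ∀ z, e z ∈ M := by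
    intro z
    rw [hM, aux_mem_fixed]
    obtain ⟨a, b, hb, rfl⟩ := IsFractionRing.div_surjective (A := F[X]) z
    rw [map_div₀, he, he, map_div₀, hΨM, hΨM]
  refine ⟨AlgEquiv.ofBijective (e.codRestrict M.toSubalgebra heM) ⟨?_, ?_⟩⟩
  · intro a b h
    exact e.toRingHom.injective (congrArg Subtype.val h)
  · rintro ⟨z, hz⟩
    have hz' : τ z = z := (aux_mem_fixed τ z).1 hz
    obtain ⟨a, b, hb, hab⟩ := hsurj z
    have hΦ0 : ∀ P : K[X], P ≠ 0 → eval₂ (φ : K →+* L) s P ≠ 0 := by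
      intro P hP h
      exact hP (hinj (by simpa using h))
    -- reduce
    obtain ⟨a, b, hb, hcop, hab⟩ : ∃ a b : K[X], b.Monic ∧ IsCoprime a b ∧
        z * eval₂ (φ : K →+* L) s b = eval₂ (φ : K →+* L) s a := by
      obtain ⟨a', b', g, hrel, ha', hb'⟩ :=
        UniqueFactorizationMonoid.exists_reduced_factors' a b hb
      have hc : IsCoprime a' b' := hrel.isCoprime
      have hg : g ≠ 0 := by
        rintro rfl
        rw [zero_mul] at hb'
        exact hb hb'.symm
      have hb0 : b' ≠ 0 := by
        intro h
        rw [h, mul_zero] at hb'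
        exact hb hb'.symm
      have hl : b'.leadingCoeff ≠ 0 := by simpa using hb0
      have hu : IsUnit (C (b'.leadingCoeff⁻¹) : K[X]) := by
        rw [Polynomial.isUnit_C]
        exact (inv_ne_zero hl).isUnit
      refine ⟨a' * C (b'.leadingCoeff⁻¹), b' * C (b'.leadingCoeff⁻¹),
        Polynomial.monic_mul_leadingCoeff_inv hb0, ?_, ?_⟩
      · rw [isCoprime_mul_unit_right hu]
        exact hc
      · rw [hab, ← ha', ← hb']
        simp only [Polynomial.eval₂_mul]
        have h1 := hΦ0 _ hg
        have h2 := hΦ0 _ hb0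
        field_simp
    have hkey := congrArg τ hab
    rw [map_mul, hz', hτΦ, hτΦ] at hkey
    have hh : a.map (σ : K →+* K) * b = a * b.map (σ : K →+* K) := by
      apply hinj
      simp only [coe_eval₂RingHom, Polynomial.eval₂_mul]
      rw [← hkey, ← hab]
      ring
    obtain ⟨h1, h2⟩ := aux_coeff _ a b hb hcop hh
    have hlift : ∀ P : K[X], P.map (σ : K →+* K) = P → ∃ Q : F[X], Q.map (algebraMap F K) = P := by
      intro P hP
      have : P ∈ Polynomial.lifts (algebraMap F K) := by
        rw [Polynomial.lifts_iff_coeff_lifts]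
        intro n
        have h3 : σ (P.coeff n) = P.coeff n := by
          have := congrArg (fun q => q.coeff n) hP
          simpa using this
        exact ⟨⟨P.coeff n, (aux_mem_fixed σ _).2 h3⟩, rfl⟩
      exact (Polynomial.mem_lifts _).1 this
    obtain ⟨A, rfl⟩ := hlift a h1
    obtain ⟨B, rfl⟩ := hlift b h2
    refine ⟨algebraMap _ _ A / algebraMap _ _ B, Subtype.ext ?_⟩
    change e _ = z
    rw [map_div₀, he, he, hΨ, hΨ, ← hab, mul_div_cancel_right₀]
    exact hΦ0 _ hb.ne_zero

theorem aux_indep {k L : Type*} [Field k] [Field L] [Algebra k L] (n : ℕ)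
    (x : Fin (n+1) → L) (hx : AlgebraicIndependent k x)
    (htop : ∀ z, z ∈ IntermediateField.adjoin k (Set.range x))
    (u : Option (Fin n) → L) (h0 : u none = ∑ i, x i)
    (h1 : ∀ i, u (some i) = x i.castSucc / ∑ j, x j) (hs : ∑ i, x i ≠ 0) :
    AlgebraicIndependent k u ∧ ∀ z, z ∈ IntermediateField.adjoin k (Set.range u) := by
  have hle : IntermediateField.adjoin k (Set.range x) ≤
      IntermediateField.adjoin k (Set.range u) := by
    rw [IntermediateField.adjoin_le_iff]
    set E := IntermediateField.adjoin k (Set.range u)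
    have hu : ∀ o, u o ∈ E := fun o => IntermediateField.subset_adjoin _ _ ⟨o, rfl⟩
    have hc : ∀ i : Fin n, x i.castSucc ∈ E := by
      intro i
      have : x i.castSucc = u (some i) * u none := by
        rw [h1, h0]; field_simp
      rw [this]
      exact mul_mem (hu _) (hu _)
    rintro _ ⟨i, rfl⟩
    induction i using Fin.lastCases with
    | last =>
      have : x (Fin.last n) = u none - ∑ i : Fin n, x i.castSucc := by
        rw [h0, Fin.sum_univ_castSucc]; ring
      rw [this]
      exact sub_mem (hu _) (sum_mem fun i _ => hc i)
    | cast i => exact hc i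
  have htop' : ∀ z, z ∈ IntermediateField.adjoin k (Set.range u) := fun z => hle (htop z)
  refine ⟨?_, htop'⟩
  have : Algebra.IsAlgebraic (Algebra.adjoin k (Set.range u)) L := by
    constructor
    intro z
    obtain ⟨a, ha, b, hb, rfl⟩ := (IntermediateField.mem_adjoin_iff_div).1 (htop' z)
    rw [div_eq_mul_inv]
    exact (isAlgebraic_algebraMap (⟨a, ha⟩ : Algebra.adjoin k (Set.range u))).mul
      (isAlgebraic_algebraMap (⟨b, hb⟩ : Algebra.adjoin k (Set.range u))).inv
  have h := hx.lift_cardinalMk_le_trdeg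
  refine (Algebra.IsAlgebraic.isTranscendenceBasis_of_lift_le_trdeg_of_finite k u ?_).1
  simpa using h

open Polynomial in
theorem aux_transc {k K L : Type*} [Field k] [Field L] [Algebra k L] (n : ℕ)
    [Field K] [Algebra k K] [Algebra (MvPolynomial (Fin n) k) K]
    [IsScalarTower k (MvPolynomial (Fin n) k) K] [IsFractionRing (MvPolynomial (Fin n) k) K]
    (u : Option (Fin n) → L) (hu : AlgebraicIndependent k u) :
    ∃ φ : K →ₐ[k] L, (∀ i, φ (algebraMap (MvPolynomial (Fin n) k) K (MvPolynomial.X i)) = u (some i)) ∧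
      Function.Injective (eval₂RingHom (φ : K →+* L) (u none)) := by
  have hv : AlgebraicIndependent k (fun i => u (some i)) :=
    hu.comp _ (Option.some_injective _)
  have hv' : Function.Injective
      (MvPolynomial.aeval (fun i => u (some i)) : MvPolynomial (Fin n) k →ₐ[k] L) := hv
  let φ : K →ₐ[k] L := IsFractionRing.liftAlgHom (K := K) (R := k) hv'
  have hφ : ∀ P, φ (algebraMap _ K P) = MvPolynomial.aeval (fun i => u (some i)) P := fun P =>
    IsFractionRing.lift_algebraMap hv' P
  refine ⟨φ, fun i => by rw [hφ]; simp, ?_⟩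
  have ht : Transcendental (Algebra.adjoin k (Set.range fun i => u (some i))) (u none) := by
    rw [← hv.option_iff_transcendental]
    convert hu using 1
    ext o
    cases o <;> rfl
  letI : Algebra K L := (φ : K →+* L).toAlgebra
  letI : Algebra (MvPolynomial (Fin n) k) L :=
    ((φ : K →+* L).comp (algebraMap _ K)).toAlgebra
  haveI : IsScalarTower (MvPolynomial (Fin n) k) K L := IsScalarTower.of_algebraMap_eq fun _ => rfl
  have hT : Transcendental K (u none) := by
    intro h
    rw [← IsFractionRing.isAlgebraic_iff (MvPolynomial (Fin n) k)] at h
    obtain ⟨P, hP, hP0⟩ := h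
    apply ht
    refine ⟨P.map (hv.aevalEquiv : _ →+* _), ?_, ?_⟩
    · rwa [Ne, Polynomial.map_eq_zero_iff hv.aevalEquiv.injective]
    · rw [Polynomial.aeval_def, Polynomial.eval₂_map]
      rw [Polynomial.aeval_def] at hP0
      rw [← hP0]
      congr 1
      ext i
      · simp [RingHom.algebraMap_toAlgebra, hφ]
      · simp [RingHom.algebraMap_toAlgebra, hφ]
  exact transcendental_iff_injective.1 hT

open Polynomial in
theorem aux_final {k K L : Type*} [Field k] [Field L] [Algebra k L] (n : ℕ) (hn : 0 < n)
    [Field K] [Algebra k K] [Algebra (MvPolynomial (Fin n) k) K]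
    [IsScalarTower k (MvPolynomial (Fin n) k) K] [IsFractionRing (MvPolynomial (Fin n) k) K]
    [Algebra (MvPolynomial (Fin (n+1)) k) L]
    [IsScalarTower k (MvPolynomial (Fin (n+1)) k) L]
    [IsFractionRing (MvPolynomial (Fin (n+1)) k) L]
    (y : Fin n → K) (hy : ∀ i, y i = algebraMap (MvPolynomial (Fin n) k) K (MvPolynomial.X i))
    (σ : K ≃ₐ[k] K)
    (hσ : ∀ i j : Fin n, (j : ℕ) = (i : ℕ) + 1 → σ (y i) = y j)
    (hσlast : ∀ i : Fin n, (i : ℕ) = n - 1 → σ (y i) = 1 - ∑ j, y j)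
    (x : Fin (n+1) → L)
    (hx : ∀ i, x i = algebraMap (MvPolynomial (Fin (n+1)) k) L (MvPolynomial.X i))
    (τ : L ≃ₐ[k] L)
    (hτ : ∀ i j : Fin (n+1), (j : ℕ) = ((i : ℕ) + 1) % (n+1) → τ (x i) = x j) :
    Nonempty
      (FractionRing (Polynomial (IntermediateField.fixedField (Subgroup.zpowers σ))) ≃ₐ[k]
       IntermediateField.fixedField (Subgroup.zpowers τ)) := by
  have haev : ∀ P, algebraMap (MvPolynomial (Fin (n+1)) k) L P = MvPolynomial.aeval x P := by
    intro P
    have : IsScalarTower.toAlgHom k (MvPolynomial (Fin (n+1)) k) L = MvPolynomial.aeval x := by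
      ext i
      simp [hx]
    exact DFunLike.congr_fun this P
  have hxi : AlgebraicIndependent k x := by
    intro P Q h
    rw [← haev, ← haev] at h
    exact IsFractionRing.injective (MvPolynomial (Fin (n+1)) k) L h
  have htop : ∀ z, z ∈ IntermediateField.adjoin k (Set.range x) := by
    intro z
    obtain ⟨a, b, hb, rfl⟩ := IsFractionRing.div_surjective (A := MvPolynomial (Fin (n+1)) k) z
    rw [haev, haev]
    have h : ∀ P : MvPolynomial (Fin (n+1)) k, MvPolynomial.aeval x P ∈
        IntermediateField.adjoin k (Set.range x) := by
      intro P
      apply IntermediateField.algebra_adjoin_le_adjoin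
      rw [Algebra.adjoin_range_eq_range_aeval]
      exact ⟨P, rfl⟩
    exact div_mem (h a) (h b)
  set s := ∑ i, x i with hs
  have hs0 : s ≠ 0 := by
    intro h
    have h1 : MvPolynomial.aeval x (∑ i, MvPolynomial.X i : MvPolynomial (Fin (n+1)) k) =
      MvPolynomial.aeval x (0 : MvPolynomial (Fin (n+1)) k) := by
      simpa [hs] using h
    have h2 := hxi h1
    have h3 := congrArg (MvPolynomial.eval (Pi.single 0 1 : Fin (n+1) → k)) h2
    simp at h3
  let u : Option (Fin n) → L := fun o => o.elim s (fun i => x i.castSucc / s)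
  obtain ⟨hui, hut⟩ := aux_indep n x hxi htop u rfl (fun _ => rfl) hs0
  obtain ⟨φ, hφ, hinj⟩ := aux_transc (K := K) n u hui
  have hφy : ∀ i, φ (y i) = x i.castSucc / s := fun i => by rw [hy, hφ]; rfl
  have hτs : τ s = s := by
    rw [hs, map_sum]
    rw [← Equiv.sum_comp (finRotate (n+1)) x]
    refine Finset.sum_congr rfl fun i _ => hτ _ _ ?_
    rw [finRotate_apply, Fin.val_add, Fin.val_one', Nat.add_mod_mod]
  refine aux_main_s4 φ s σ τ ?_ hτs hinj ?_
  · have hpoly : (τ : L →ₐ[k] L).comp (φ.comp (IsScalarTower.toAlgHom k (MvPolynomial (Fin n) k) K))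
        = φ.comp ((σ : K →ₐ[k] K).comp (IsScalarTower.toAlgHom k (MvPolynomial (Fin n) k) K)) := by
      ext i
      change τ (φ (algebraMap (MvPolynomial (Fin n) k) K (MvPolynomial.X i))) =
        φ (σ (algebraMap (MvPolynomial (Fin n) k) K (MvPolynomial.X i)))
      rw [← hy, hφy, map_div₀, hτs]
      by_cases hi : (i : ℕ) = n - 1
      · rw [hσlast i hi, map_sub, map_one, map_sum]
        simp only [hφy]
        rw [hτ i.castSucc (Fin.last n)]
        · rw [← Finset.sum_div, eq_sub_iff_add_eq, ← add_div, add_comm, ← Fin.sum_univ_castSucc]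
          exact div_self hs0
        · simp only [Fin.val_last, Fin.val_castSucc]
          rw [Nat.mod_eq_of_lt] <;> omega
      · have hi' : (i : ℕ) + 1 < n := by omega
        rw [hσ i ⟨i + 1, hi'⟩ rfl, hφy, hτ i.castSucc (Fin.castSucc ⟨i + 1, hi'⟩)]
        simp only [Fin.val_castSucc]
        rw [Nat.mod_eq_of_lt]; omega
    intro a
    obtain ⟨a, b, hb, rfl⟩ := IsFractionRing.div_surjective (A := MvPolynomial (Fin n) k) a
    have h : ∀ P : MvPolynomial (Fin n) k, τ (φ (algebraMap (MvPolynomial (Fin n) k) K P)) =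
        φ (σ (algebraMap (MvPolynomial (Fin n) k) K P)) := fun P => DFunLike.congr_fun hpoly P
    simp only [map_div₀, h]
  · intro z
    obtain ⟨a, ha, b, hb, hz⟩ := (IntermediateField.mem_adjoin_iff_div).1 (hut z)
    let Φ : K[X] →ₐ[k] L := aux_ev φ s
    have hle : Algebra.adjoin k (Set.range u) ≤ Φ.range := by
      rw [Algebra.adjoin_le_iff]
      rintro _ ⟨o, rfl⟩
      cases o with
      | none => exact ⟨X, Polynomial.eval₂_X _ _⟩
      | some i => exact ⟨C (y i), (Polynomial.eval₂_C _ _).trans (hφy i)⟩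
    obtain ⟨A, rfl⟩ := hle ha
    obtain ⟨B, rfl⟩ := hle hb
    by_cases hB : B = 0
    · refine ⟨0, 1, one_ne_zero, ?_⟩
      rw [hz, hB]
      simp
    · exact ⟨A, B, hB, hz⟩

/-- for `p` an odd prime and `char k ≠ p`, if `σ` is the automorphism
`y₁ ↦ ⋯ ↦ y_{p-1} ↦ 1 - Σ y_i` of `k(y₁,…,y_{p-1})`, then the fixed field
`k(y₁,…,y_{p-1})^⟨σ⟩` with one transcendental `z` adjoined (i.e. its univariate
rational function field) is `k`-isomorphic to `k(C_p)`, the fixed field of the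
cyclic shift `τ` on `k(x₀,…,x_{p-1})`. -/
theorem stmt4 (k : Type*) [Field k] (p : ℕ) (hp : p.Prime) (hodd : Odd p)
    (hchar : ¬ CharP k p)
    (y : Fin (p - 1) → FractionRing (MvPolynomial (Fin (p - 1)) k))
    (hy : ∀ i, y i = algebraMap (MvPolynomial (Fin (p - 1)) k)
      (FractionRing (MvPolynomial (Fin (p - 1)) k)) (MvPolynomial.X i))
    (σ : FractionRing (MvPolynomial (Fin (p - 1)) k) ≃ₐ[k]
         FractionRing (MvPolynomial (Fin (p - 1)) k))
    (hσ : ∀ i j : Fin (p - 1), (j : ℕ) = (i : ℕ) + 1 → σ (y i) = y j)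
    (hσlast : ∀ i : Fin (p - 1), (i : ℕ) = p - 2 → σ (y i) = 1 - ∑ j, y j)
    (x : Fin p → FractionRing (MvPolynomial (Fin p) k))
    (hx : ∀ i, x i = algebraMap (MvPolynomial (Fin p) k)
      (FractionRing (MvPolynomial (Fin p) k)) (MvPolynomial.X i))
    (τ : FractionRing (MvPolynomial (Fin p) k) ≃ₐ[k]
         FractionRing (MvPolynomial (Fin p) k))
    (hτ : ∀ i j : Fin p, (j : ℕ) = ((i : ℕ) + 1) % p → τ (x i) = x j) :
    Nonempty
      (FractionRing (Polynomial (IntermediateField.fixedField (Subgroup.zpowers σ))) ≃ₐ[k]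
       IntermediateField.fixedField (Subgroup.zpowers τ)) := by
  obtain ⟨n, rfl⟩ : ∃ n, p = n + 1 := ⟨p - 1, by have := hp.pos; omega⟩
  have hn : 0 < n := by have := hp.two_le; omega
  exact aux_final (K := FractionRing (MvPolynomial (Fin n) k)) n hn y hy σ hσ hσlast x hx τ hτ
end

section
/- Let k be a field, n a positive integer, d an integer with gcd(d,n)=1, and K := k(t,s,x₀,…,x_{n-1}) a field with trdeg_k K = n+1 and t^d = x₀x₁⋯x_{n-1}. Let G ≤ S_n and χ: G → k^× a homomorphism with χ^d = 1, with G acting on K by k-automorphisms via σ·t = χ(σ)t, σ·s = s, σ·x_i = x_{σ(i)}. Then there exists u ∈ K fixed by G such that K^G = k(x₀/s, x₁/s, …, x_{n-1}/s)^G (u). -/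
set_option maxHeartbeats 1000000
set_option synthInstance.maxHeartbeats 400000

open IntermediateField in
lemma aux_card {k K : Type*} [Field k] [Field K] [Algebra k K] (m : ℕ)
    (htr : ∃ b : Fin m → K, IsTranscendenceBasis k b) (S T : Set K) (hS : S.Finite)
    (hT : adjoin k T = ⊤) (h : ∀ y ∈ T, IsAlgebraic (adjoin k S) y) : m ≤ S.ncard := by
  have halg : Algebra.IsAlgebraic (adjoin k S) K := by
    have h1 : adjoin k T ≤ (algebraicClosure (adjoin k S) K).restrictScalars k := by
      rw [adjoin_le_iff]
      intro y hy
      exact mem_algebraicClosure_iff.2 (h y hy)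
    rw [hT] at h1
    exact ⟨fun y => mem_algebraicClosure_iff.1 (h1 (mem_top : y ∈ (⊤ : IntermediateField k K)))⟩
  rw [isAlgebraic_adjoin_iff_top] at halg
  have h2 := Algebra.IsAlgebraic.trdeg_le_cardinalMk k S
  obtain ⟨b, hb⟩ := htr
  have h3 := hb.lift_cardinalMk_eq_trdeg
  simp at h3
  rw [← h3] at h2
  rw [← Set.cast_ncard hS] at h2
  exact_mod_cast h2

lemma aux_indep_s5 {k K : Type*} [Field k] [Field K] [Algebra k K] {G : Type*} [Group G] [Fintype G]
    (φ : G →* (K ≃ₐ[k] K)) (L : IntermediateField k K)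
    (hinj : ∀ g, (∀ l ∈ L, φ g l = l) → g = 1) (a : G → K) (ha : a 1 ≠ 0) :
    ∃ c ∈ L, ∑ g, a g * φ g c ≠ 0 := by
  by_contra! hcon
  have hli := linearIndependent_monoidHom L K
  let F : G → (L →* K) := fun g => ((φ g : K →* K)).comp (L.val : L →* K)
  have hF : Function.Injective F := by
    intro g h hgh
    have : h⁻¹ * g = 1 := by
      apply hinj
      intro l hl
      have := DFunLike.congr_fun hgh ⟨l, hl⟩
      have h2 : φ g l = φ h l := this
      rw [map_mul, AlgEquiv.mul_apply, h2, ← AlgEquiv.mul_apply, ← map_mul]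
      simp
    exact (inv_mul_eq_one.1 this).symm
  have h2 := hli.comp F hF
  rw [Fintype.linearIndependent_iff] at h2
  apply ha
  apply h2 a
  ext l
  simp only [Finset.sum_apply, Pi.smul_apply, smul_eq_mul, Pi.zero_apply, Function.comp]
  exact hcon l l.2

open IntermediateField in
lemma aux_fixed_s5 {k K : Type*} [Field k] [Field K] [Algebra k K] {G : Type*} [Group G] 
    (φ : G →* (K ≃ₐ[k] K)) (f : K) : f ∈ fixedField φ.range ↔ ∀ g, φ g f = f := by
  constructor
  · intro h g
    exact h ⟨φ g, g, rfl⟩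
  · rintro h ⟨_, g, rfl⟩
    exact h g

open IntermediateField in
lemma aux_alg {k K : Type*} [Field k] [Field K] [Algebra k K] {G : Type*} [Group G] [Fintype G]
    (φ : G →* (K ≃ₐ[k] K)) (L M : IntermediateField k K) (hL : ∀ g, ∀ l ∈ L, φ g l ∈ L)
    (hM : fixedField φ.range ⊓ L ≤ M) (l : K) (hl : l ∈ L) : IsAlgebraic M l := by
  classical
  let p : Polynomial K := ∏ g, (Polynomial.X - Polynomial.C (φ g l))
  have hp : p.Monic := Polynomial.monic_prod_of_monic _ _ fun g _ => Polynomial.monic_X_sub_C _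
  have h1 : ∀ i, p.coeff i ∈ L := by
    have : p ∈ Polynomial.lifts (algebraMap L K) := by
      apply Subsemiring.prod_mem
      intro g _
      rw [Polynomial.mem_lifts]
      exact ⟨Polynomial.X - Polynomial.C ⟨φ g l, hL g l hl⟩, by simp⟩
    rw [Polynomial.lifts_iff_coeff_lifts] at this
    intro i
    obtain ⟨y, hy⟩ := this i
    rw [← hy]; exact y.2
  have h2 : ∀ i, p.coeff i ∈ fixedField φ.range := by
    intro i
    rw [aux_fixed_s5]
    intro h
    have h3 : p.map (φ h : K →+* K) = p := by
      simp only [p, Polynomial.map_prod, Polynomial.map_sub, Polynomial.map_X, Polynomial.map_C]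
      refine Fintype.prod_equiv (Equiv.mulLeft h) _ _ fun g => ?_
      simp
    conv_rhs => rw [← h3]
    simp
  have h3 : p ∈ Polynomial.lifts (algebraMap M K) := by
    rw [Polynomial.lifts_iff_coeff_lifts]
    intro i
    exact ⟨⟨p.coeff i, hM ⟨h2 i, h1 i⟩⟩, rfl⟩
  obtain ⟨q, hq, -, hqm⟩ := Polynomial.lifts_and_natDegree_eq_and_monic h3 hp
  refine ⟨q, hqm.ne_zero, ?_⟩
  rw [← Polynomial.eval_map_algebraMap, hq, Polynomial.eval_prod]
  exact Finset.prod_eq_zero (Finset.mem_univ 1) (by simp)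

open IntermediateField in
lemma aux_main_s5 {k K : Type*} [Field k] [Field K] [Algebra k K] {G : Type*} [Group G] [Fintype G]
    (φ : G →* (K ≃ₐ[k] K)) (L : IntermediateField k K) (hL : ∀ g, ∀ l ∈ L, φ g l ∈ L)
    (hinj : ∀ g, (∀ l ∈ L, φ g l = l) → g = 1) (u : K) (hu : ∀ g, φ g u = u)
    (htop : L ⊔ adjoin k {u} = ⊤) :
    fixedField φ.range = (fixedField φ.range ⊓ L) ⊔ adjoin k {u} := by
  obtain ⟨M, hM⟩ : ∃ M, M = (fixedField φ.range ⊓ L) ⊔ adjoin k {u} := ⟨_, rfl⟩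
  rw [← hM]
  have hEM : fixedField φ.range ⊓ L ≤ M := hM ▸ le_sup_left
  have huM : adjoin k {u} ≤ M := hM ▸ le_sup_right
  have hMF : M ≤ fixedField φ.range := by
    rw [hM]
    refine sup_le inf_le_left ?_
    rw [adjoin_le_iff]
    rintro _ rfl
    exact (aux_fixed_s5 φ _).2 hu
  refine le_antisymm ?_ hMF
  intro f hf
  rw [aux_fixed_s5] at hf
  obtain ⟨c, hc, hc0⟩ := aux_indep_s5 φ L hinj (fun _ => 1) one_ne_zero
  simp only [one_mul] at hc0
  have htrL : ∀ l ∈ L, ∑ g, φ g l ∈ M := by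
    intro l hl
    refine hEM ⟨?_, sum_mem fun g _ => hL g l hl⟩
    apply (aux_fixed_s5 φ _).2
    intro h
    rw [map_sum]
    refine Fintype.sum_equiv (Equiv.mulLeft h) _ _ fun g => ?_
    simp
  have hspan : f ∈ Submodule.span M (L : Set K) := by
    have h1 : adjoin M (L : Set K) = ⊤ := by
      have : L ⊔ adjoin k {u} ≤ (adjoin M (L : Set K)).restrictScalars k := by
        refine sup_le (fun l hl => subset_adjoin M _ hl) ?_
        refine huM.trans fun m hm => ?_
        exact (adjoin M (L : Set K)).algebraMap_mem ⟨m, hm⟩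
      rw [htop] at this
      exact top_le_iff.1 fun y _ => this (mem_top : y ∈ (⊤ : IntermediateField k K))
    rw [adjoin_eq_top_iff_of_isAlgebraic (aux_alg φ L M hL hEM)] at h1
    have h2 := Algebra.adjoin_eq_span M (L : Set K)
    have h3 : Submonoid.closure (L : Set K) = L.toSubfield.toSubmonoid :=
      Submonoid.closure_eq L.toSubfield.toSubmonoid
    rw [h1, h3] at h2
    have : f ∈ Subalgebra.toSubmodule (⊤ : Subalgebra M K) := by simp
    rw [h2] at this
    exact this
  have hkey : ∀ y ∈ Submodule.span M (L : Set K), ∑ g, φ g (c * y) ∈ M := by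
    intro y hy
    induction hy using Submodule.span_induction with
    | mem l hl => exact htrL _ (mul_mem hc hl)
    | zero => simp
    | add a b _ _ ha hb =>
      simp only [mul_add, map_add, Finset.sum_add_distrib]
      exact add_mem ha hb
    | smul m a _ ha =>
      have : ∑ g, φ g (c * m • a) = m * ∑ g, φ g (c * a) := by
        rw [Finset.mul_sum]
        refine Finset.sum_congr rfl fun g _ => ?_
        have hm := (aux_fixed_s5 φ _).1 (hMF m.2) g
        have h5 : m • a = (m : K) * a := rfl
        rw [h5, map_mul, map_mul, map_mul, hm]; ring
      rw [this]
      exact mul_mem m.2 ha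
  have h4 := hkey f hspan
  have h5 : ∑ g, φ g (c * f) = (∑ g, φ g c) * f := by
    rw [Finset.sum_mul]
    exact Finset.sum_congr rfl fun g _ => by rw [map_mul, hf]
  rw [h5] at h4
  have := div_mem h4 (htrL c hc)
  rwa [mul_div_cancel_left₀ _ hc0] at this

open IntermediateField in
lemma aux_nondeg {k K : Type*} [Field k] [Field K] [Algebra k K]
    (n : ℕ) (hn : 0 < n) (d : ℤ) (hd : IsCoprime d (n : ℤ))
    (t s : K) (x : Fin n → K)
    (hrel : t ^ d = ∏ i, x i)
    (hgen : IntermediateField.adjoin k ({t, s} ∪ Set.range x) = ⊤)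
    (htrdeg : ∃ b : Fin (n + 1) → K, IsTranscendenceBasis k b) :
    t ≠ 0 ∧ s ≠ 0 ∧ (∀ i, x i ≠ 0) ∧ Function.Injective x := by
  classical
  by_cases hd0 : d = 0
  · subst hd0
    have hn1 : n = 1 := by
      have := isCoprime_zero_left.1 hd
      rw [Int.isUnit_iff] at this
      omega
    subst hn1
    have hx : ∀ i, x i = 1 := by
      intro i
      have : i = 0 := Subsingleton.elim _ _
      subst this
      simpa using hrel.symm
    have h := aux_card (k := k) 2 htrdeg ({t, s} \ {0}) _ ((Set.toFinite _).subset Set.sdiff_subset) hgen (by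
      rintro y ((rfl | rfl) | ⟨i, rfl⟩)
      · by_cases h0 : y = 0
        · rw [h0]; exact isAlgebraic_zero
        · exact isAlgebraic_algebraMap (⟨y, subset_adjoin _ _ (by simp [h0])⟩ : adjoin k ({y, s} \ {0}))
      · by_cases h0 : y = 0
        · rw [h0]; exact isAlgebraic_zero
        · exact isAlgebraic_algebraMap (⟨y, subset_adjoin _ _ (by simp [h0])⟩ : adjoin k ({t, y} \ {0}))
      · rw [hx]; exact isAlgebraic_one)
    have hc1 : ∀ a : K, ({a} : Set K).ncard = 1 := Set.ncard_singleton
    refine ⟨?_, ?_, fun i => by simp [hx], fun i j _ => Subsingleton.elim _ _⟩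
    · rintro rfl
      have : ({0, s} \ {0} : Set K) ⊆ {s} := by intro y; simp; tauto
      have := Set.ncard_le_ncard this
      rw [hc1] at this; omega
    · rintro rfl
      have : ({t, 0} \ {0} : Set K) ⊆ {t} := by intro y; simp; tauto
      have := Set.ncard_le_ncard this
      rw [hc1] at this; omega
  · let y : Option (Fin n) → K := fun o => o.elim s x
    have hmem : ∀ o, y o ∈ adjoin k (Set.range y \ {0}) := by
      intro o
      by_cases h0 : y o = 0
      · rw [h0]; exact zero_mem _
      · exact subset_adjoin _ _ ⟨⟨o, rfl⟩, h0⟩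
    have hprod : t ^ d ∈ adjoin k (Set.range y \ {0}) := by
      rw [hrel]; exact prod_mem fun i _ => hmem (some i)
    have h := aux_card (k := k) (n+1) htrdeg (Set.range y \ {0}) _ ((Set.toFinite _).subset Set.sdiff_subset) hgen (by
      have halg : ∀ z ∈ adjoin k (Set.range y \ {0}), IsAlgebraic (adjoin k (Set.range y \ {0})) z :=
        fun z hz => isAlgebraic_algebraMap (⟨z, hz⟩ : adjoin k (Set.range y \ {0}))
      rintro z ((rfl | rfl) | ⟨i, rfl⟩)
      · have h1 : z ^ d.natAbs ∈ adjoin k (Set.range y \ {0}) := by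
          rcases Int.natAbs_eq d with h | h
          · rw [h, zpow_natCast] at hprod; exact hprod
          · rw [h, zpow_neg, zpow_natCast] at hprod; exact inv_mem_iff.1 hprod
        exact IsAlgebraic.of_pow (by omega) (halg _ h1)
      · exact halg _ (hmem none)
      · exact halg _ (hmem (some i)))
    have hr : (Set.range y).ncard ≤ n + 1 := by
      rw [← Set.image_univ]
      refine (Set.ncard_image_le).trans ?_
      simp [Set.ncard_univ]
    have h0 : (0 : K) ∉ Set.range y := by
      intro h0
      have := Set.ncard_sdiff_singleton_lt_of_mem h0 (Set.toFinite _)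
      omega
    have hy : Function.Injective y := by
      rw [← Set.injOn_univ]
      apply (Set.ncard_image_iff (Set.toFinite _)).1
      rw [Set.image_univ]
      rw [Set.sdiff_singleton_eq_self h0] at h
      simp [Set.ncard_univ]
      omega
    have hx0 : ∀ i, x i ≠ 0 := fun i hi => h0 ⟨some i, hi⟩
    refine ⟨?_, fun hs => h0 ⟨none, hs⟩, hx0, fun i j hij => Option.some_injective _ (hy hij)⟩
    rintro rfl
    rw [zero_zpow _ hd0] at hrel
    obtain ⟨i, -, hi⟩ := Finset.prod_eq_zero_iff.1 hrel.symm
    exact hx0 i hi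

/-- Theorem 1.5: let `K = k(t,s,x₀,…,x_{n-1})` with
`trdeg_k K = n+1` and `t^d = x₀⋯x_{n-1}` where `gcd(d,n) = 1`.  If `G ≤ S_n`
acts by `k`-automorphisms via `σ·t = χ(σ)t`, `σ·s = s`, `σ·x_i = x_{σ(i)}`
for a character `χ : G → kˣ` with `χ^d = 1`, then there is a `G`-fixed `u ∈ K`
with `K^G = k(x₀/s, …, x_{n-1}/s)^G (u)`. -/
theorem stmt5 (k K : Type*) [Field k] [Field K] [Algebra k K]
    (n : ℕ) (hn : 0 < n) (d : ℤ) (hd : IsCoprime d (n : ℤ))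
    (t s : K) (x : Fin n → K)
    (hrel : t ^ d = ∏ i, x i)
    (hgen : IntermediateField.adjoin k ({t, s} ∪ Set.range x) = ⊤)
    (htrdeg : ∃ b : Fin (n + 1) → K, IsTranscendenceBasis k b)
    (G : Subgroup (Equiv.Perm (Fin n)))
    (φ : G →* (K ≃ₐ[k] K)) (χ : G →* kˣ)
    (hχ : ∀ g : G, (χ g) ^ d = 1)
    (hφt : ∀ g : G, φ g t = ((χ g : k)) • t)
    (hφs : ∀ g : G, φ g s = s)
    (hφx : ∀ (g : G) (i : Fin n), φ g (x i) = x ((g : Equiv.Perm (Fin n)) i)) :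
    ∃ u : K, (∀ g : G, φ g u = u) ∧
      IntermediateField.fixedField φ.range =
        (IntermediateField.fixedField φ.range ⊓
          IntermediateField.adjoin k (Set.range fun i => x i / s)) ⊔
        IntermediateField.adjoin k {u} := by
  classical
  obtain ⟨ht, hs, hx, hxinj⟩ := aux_nondeg n hn d hd t s x hrel hgen htrdeg
  obtain ⟨L, hLdef⟩ : ∃ L, L = IntermediateField.adjoin k (Set.range fun i => x i / s) := ⟨_, rfl⟩
  rw [← hLdef]
  have hxL : ∀ i, x i / s ∈ L := fun i => by
    rw [hLdef]; exact IntermediateField.subset_adjoin _ _ ⟨i, rfl⟩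
  have hL : ∀ g, ∀ l ∈ L, φ g l ∈ L := by
    intro g
    have h1 : L ≤ L.comap (φ g : K →ₐ[k] K) := by
      conv_lhs => rw [hLdef]
      rw [IntermediateField.adjoin_le_iff]
      rintro _ ⟨i, rfl⟩
      change φ g (x i / s) ∈ L
      rw [map_div₀, hφx, hφs]
      exact hxL _
    exact fun l hl => h1 hl
  have hinj : ∀ g, (∀ l ∈ L, φ g l = l) → g = 1 := by
    intro g hg
    ext i : 2
    have h1 := hg _ (hxL i)
    rw [map_div₀, hφx, hφs, div_left_inj' hs] at h1
    exact hxinj h1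
  obtain ⟨a, b, hab⟩ := hd
  obtain ⟨c, hc, hc0⟩ := aux_indep_s5 φ L hinj (fun g => algebraMap k K ((χ g ^ b : kˣ) : k)) (by simp)
  obtain ⟨l, hl⟩ : ∃ l, l = ∑ g, algebraMap k K ((χ g ^ b : kˣ) : k) * φ g c := ⟨_, rfl⟩
  rw [← hl] at hc0
  have hlL : l ∈ L := by
    rw [hl]
    exact sum_mem fun g _ => mul_mem (L.algebraMap_mem _) (hL g c hc)
  have hφl : ∀ h, algebraMap k K ((χ h ^ b : kˣ) : k) * φ h l = l := by
    intro h
    conv_rhs => rw [hl]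
    rw [hl, map_sum, Finset.mul_sum]
    refine Fintype.sum_equiv (Equiv.mulLeft h) _ _ fun g => ?_
    simp only [Equiv.coe_mulLeft, map_mul, AlgEquiv.commutes, mul_zpow, Units.val_mul,
      AlgEquiv.mul_apply]
    ring
  have hφu : ∀ h, φ h (s ^ a * t ^ b) = algebraMap k K ((χ h ^ b : kˣ) : k) * (s ^ a * t ^ b) := by
    intro h
    rw [map_mul, map_zpow₀, map_zpow₀, hφs, hφt, Algebra.smul_def, mul_zpow]
    simp only [Units.val_zpow_eq_zpow_val, map_zpow₀]
    ring
  have hu : ∀ g, φ g (s ^ a * t ^ b * l) = s ^ a * t ^ b * l := by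
    intro g
    rw [map_mul, hφu]
    conv_rhs => rw [← hφl g]
    ring
  refine ⟨s ^ a * t ^ b * l, hu, aux_main_s5 φ L hL hinj _ hu ?_⟩
  obtain ⟨N, hN⟩ : ∃ N, N = L ⊔ IntermediateField.adjoin k {s ^ a * t ^ b * l} := ⟨_, rfl⟩
  rw [← hN]
  have hLN : L ≤ N := hN ▸ le_sup_left
  have huN : s ^ a * t ^ b * l ∈ N := by
    rw [hN]
    exact (le_sup_right : _ ≤ L ⊔ IntermediateField.adjoin k {s ^ a * t ^ b * l})
      (IntermediateField.subset_adjoin _ _ rfl)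
  have hu0 : s ^ a * t ^ b ∈ N := by
    have := div_mem huN (hLN hlL)
    rwa [mul_div_cancel_right₀ _ hc0] at this
  have hP : t ^ d / s ^ n ∈ N := by
    have h1 : ∏ i, (x i / s) ∈ N := prod_mem fun i _ => hLN (hxL i)
    rw [Finset.prod_div_distrib, ← hrel] at h1
    simpa using h1
  have hsN : s ∈ N := by
    have h1 : s = (s ^ a * t ^ b) ^ d * ((t ^ d / s ^ n) ^ b)⁻¹ := by
      rw [mul_zpow, div_zpow, inv_div, ← zpow_natCast, ← zpow_mul, ← zpow_mul, ← zpow_mul,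
        ← zpow_mul, mul_comm b d]
      have h2 := zpow_ne_zero (d * b) ht
      rw [mul_assoc, mul_div_cancel₀ _ h2, ← zpow_add₀ hs, mul_comm (n : ℤ) b, hab, zpow_one]
    rw [h1]
    exact mul_mem (zpow_mem hu0 _) (inv_mem (zpow_mem hP _))
  have htN : t ∈ N := by
    have h1 : t = (s ^ a * t ^ b) ^ (n : ℤ) * ((t ^ d / s ^ n) ^ a) := by
      rw [mul_zpow, div_zpow, ← zpow_natCast, ← zpow_mul, ← zpow_mul, ← zpow_mul,
        ← zpow_mul, mul_comm a n]
      have h2 := zpow_ne_zero (n * a) hs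
      rw [mul_comm (s ^ _) (t ^ _), mul_assoc, mul_div_cancel₀ _ h2, ← zpow_add₀ ht,
        mul_comm d a, add_comm, hab, zpow_one]
    rw [h1]
    exact mul_mem (zpow_mem hu0 _) (zpow_mem hP _)
  rw [← top_le_iff, ← hgen, IntermediateField.adjoin_le_iff]
  rintro z ((rfl | rfl) | ⟨i, rfl⟩)
  · exact htN
  · exact hsN
  · have h1 := mul_mem (hLN (hxL i)) hsN
    rwa [div_mul_cancel₀ _ hs] at h1
end

section
/- Let p be an odd prime and k a field of characteristic p. Let G ≤ S_{2p} be the group generated by σ₁, σ₂, λ₁, and ρ₁ρ₂ (where a generates (ℤ/pℤ)^×), acting on the rational function field k(x₀,…,x_{p-1},y₀,…,y_{p-1}) by permuting variables: σ₁: x_i ↦ x_{i+1}; σ₂: y_i ↦ y_{i+1}; λ₁: x_i ↦ y_{-i}, y_i ↦ x_i; ρ₁ρ₂: x_i ↦ x_{ai}, y_i ↦ y_{ai} (indices mod p). Then the fixed field k(x₀,…,x_{p-1},y₀,…,y_{p-1})^G is purely transcendental over k. -/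
set_option maxHeartbeats 1000000
set_option synthInstance.maxHeartbeats 400000

open Sum

namespace Stmt8

section generic
variable {k K : Type*} [Field k] [Field K] [Algebra k K]

/-- The key descent step. -/
lemma step (A : Set K) (α x b c : K) (n : ℕ) (hn : 2 ≤ n)
    (hb : b ∈ IntermediateField.adjoin k A) (hc : c ∈ IntermediateField.adjoin k A)
    (hα : α ^ n = b * α + c)
    (hx : x ∈ IntermediateField.adjoin k (A ∪ {α}))
    (τ : Fin n → (K ≃ₐ[k] K)) (hA : ∀ i, ∀ y ∈ A, τ i y = y) (hτx : ∀ i, τ i x = x)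
    (hinj : Function.Injective fun i => τ i α) :
    x ∈ IntermediateField.adjoin k A := by
  classical
  set E := IntermediateField.adjoin k A with hE
  let f : Polynomial E := Polynomial.X ^ n - (Polynomial.C ⟨b, hb⟩ * Polynomial.X + Polynomial.C ⟨c, hc⟩)
  have hdeg : (Polynomial.C (⟨b, hb⟩ : E) * Polynomial.X + Polynomial.C (⟨c, hc⟩ : E)).degree < (n : WithBot ℕ) := by
    refine lt_of_le_of_lt Polynomial.degree_linear_le ?_
    exact_mod_cast hn
  have hf : f.Monic := Polynomial.monic_X_pow_sub hdeg
  have hfd : f.natDegree = n := by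
    have : f.degree = n := by
      rw [Polynomial.degree_sub_eq_left_of_degree_lt] <;> simp
      exact hdeg
    exact Polynomial.natDegree_eq_of_degree_eq_some this
  have hfα : Polynomial.aeval α f = 0 := by
    simp only [f, map_sub, map_add, map_mul, map_pow, Polynomial.aeval_X, Polynomial.aeval_C, hα]
    exact sub_self _
  have halg : IsAlgebraic E α := ⟨f, hf.ne_zero, hfα⟩
  have hx' : x ∈ Algebra.adjoin E {α} := by
    rw [← IntermediateField.adjoin_adjoin_left] at hx
    rw [← IntermediateField.adjoin_simple_toSubalgebra_of_isAlgebraic halg]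
    exact hx
  rw [Algebra.adjoin_singleton_eq_range_aeval] at hx'
  obtain ⟨P, hP⟩ := hx'
  have hP' : Polynomial.aeval α (P %ₘ f) = x := by
    rw [← hP]
    conv_rhs => rw [← Polynomial.modByMonic_add_div P f]
    simp [hfα]
  set Q := P %ₘ f with hQ
  have hQd : Q.natDegree < n := by
    rw [← hfd]
    refine Polynomial.natDegree_modByMonic_lt P hf ?_
    intro h
    rw [h] at hfd
    simp at hfd
    omega
  have hfix : ∀ i, ∀ y ∈ E, τ i y = y := by
    intro i y hy
    have : E ≤ IntermediateField.fixedField (Subgroup.zpowers (τ i)) := by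
      rw [hE, IntermediateField.adjoin_le_iff]
      intro z hz
      rw [SetLike.mem_coe, IntermediateField.mem_fixedField_iff]
      intro g hg
      have : Subgroup.zpowers (τ i) ≤ MulAction.stabilizer (K ≃ₐ[k] K) z := by
        rw [Subgroup.zpowers_le]
        exact hA i z hz
      exact this hg
    exact (IntermediateField.mem_fixedField_iff _ _).1 (this hy) _ (Subgroup.mem_zpowers _)
  have hzero : Q.map (algebraMap E K) - Polynomial.C x = 0 := by
    refine Polynomial.eq_zero_of_natDegree_lt_card_of_eval_eq_zero _ hinj ?_ ?_
    · intro i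
      have h1 : τ i (Polynomial.aeval α Q) = Polynomial.aeval (τ i α) Q := by
        rw [Polynomial.aeval_eq_sum_range, Polynomial.aeval_eq_sum_range, map_sum]
        refine Finset.sum_congr rfl fun m _ => ?_
        rw [Algebra.smul_def, Algebra.smul_def, map_mul, map_pow]
        congr 1
        exact hfix i _ (Q.coeff m).2
      rw [hP', hτx] at h1
      simp only [Polynomial.eval_sub, Polynomial.eval_C, Polynomial.eval_map_algebraMap]
      rw [← h1, sub_self]
    · rw [Fintype.card_fin]
      refine lt_of_le_of_lt (Polynomial.natDegree_sub_le _ _) ?_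
      simp [hQd]
  have h0 := congrArg (fun q => Polynomial.coeff q 0) hzero
  simp only [Polynomial.coeff_sub, Polynomial.coeff_map, Polynomial.coeff_C_zero,
    Polynomial.coeff_zero] at h0
  rw [← sub_eq_zero.1 h0]
  exact (Q.coeff 0).2

lemma alg_of_pow (E : IntermediateField k K) (α b c : K) (n : ℕ) (hn : 2 ≤ n)
    (hb : b ∈ (algebraicClosure E K).restrictScalars k)
    (hc : c ∈ (algebraicClosure E K).restrictScalars k)
    (hα : α ^ n = b * α + c) : α ∈ (algebraicClosure E K).restrictScalars k := by
  rw [IntermediateField.mem_restrictScalars] at hb hc ⊢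
  let f : Polynomial (algebraicClosure E K) :=
    Polynomial.X ^ n - (Polynomial.C ⟨b, hb⟩ * Polynomial.X + Polynomial.C ⟨c, hc⟩)
  have hdeg : (Polynomial.C (⟨b, hb⟩ : algebraicClosure E K) * Polynomial.X + Polynomial.C (⟨c, hc⟩ : algebraicClosure E K)).degree < (n : WithBot ℕ) := by
    refine lt_of_le_of_lt Polynomial.degree_linear_le ?_
    exact_mod_cast hn
  have hf : f.Monic := Polynomial.monic_X_pow_sub hdeg
  have hfα : Polynomial.aeval α f = 0 := by
    simp only [f, map_sub, map_add, map_mul, map_pow, Polynomial.aeval_X, Polynomial.aeval_C, hα]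
    exact sub_self _
  have halg : IsIntegral (algebraicClosure E K) α := ⟨f, hf, hfα⟩
  exact mem_algebraicClosure_iff'.2 (isIntegral_trans α halg)

open IntermediateField.algebraAdjoinAdjoin in
lemma algIndep_of_gen {ι : Type*} [Finite ι] (x g : ι → K) (hx : AlgebraicIndependent k x)
    (h : (algebraicClosure (IntermediateField.adjoin k (Set.range g)) K).restrictScalars k = ⊤) :
    AlgebraicIndependent k g := by
  have h1 : Algebra.IsAlgebraic (IntermediateField.adjoin k (Set.range g)) K := by
    refine ⟨fun y => ?_⟩
    have : y ∈ (algebraicClosure (IntermediateField.adjoin k (Set.range g)) K).restrictScalars k := by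
      rw [h]; trivial
    exact mem_algebraicClosure_iff.1 this
  have h2 : Algebra.IsAlgebraic (Algebra.adjoin k (Set.range g)) K :=
    IsFractionRing.comap_isAlgebraic_iff (K := IntermediateField.adjoin k (Set.range g)) |>.2 h1
  exact (Algebra.IsAlgebraic.isTranscendenceBasis_of_lift_le_trdeg_of_finite k g hx.lift_cardinalMk_le_trdeg).1

end generic

section moments
variable {K : Type*} [Field K] {p : ℕ} [Fact p.Prime] (φ : ZMod p →+* K)

/-- The mean. -/
noncomputable def mu (x : ZMod p → K) : K := (∑ i, φ i * x i) / (∑ i, x i)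

/-- The central moments. -/
noncomputable def Am (x : ZMod p → K) (m : ℕ) : K := ∑ i, (φ i - mu φ x) ^ m * x i

lemma map_mu (τ : K →+* K) (hτ : ∀ i, τ (φ i) = φ i) (x : ZMod p → K) :
    τ (mu φ x) = mu φ (fun i => τ (x i)) := by
  simp [mu, hτ, map_div₀, map_sum]

lemma map_Am (τ : K →+* K) (hτ : ∀ i, τ (φ i) = φ i) (x : ZMod p → K) (m : ℕ) :
    τ (Am φ x m) = Am φ (fun i => τ (x i)) m := by
  simp [Am, hτ, map_sum, map_mu φ τ hτ]

lemma sum_shift (f : ZMod p → K) : ∑ i, f (i + 1) = ∑ i, f i :=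
  Equiv.sum_comp (Equiv.addRight (1 : ZMod p)) f

lemma sum_mul_unit (a : (ZMod p)ˣ) (f : ZMod p → K) : ∑ i, f ((a : ZMod p) * i) = ∑ i, f i :=
  Equiv.sum_comp (Units.mulLeft a) f

lemma mu_shift (x : ZMod p → K) (h0 : ∑ i, x i ≠ 0) :
    mu φ (fun i => x (i + 1)) = mu φ x - 1 := by
  unfold mu
  rw [sum_shift x]
  have : ∑ i, φ i * x (i + 1) = ∑ i, (φ i - 1) * x i := by
    rw [← sum_shift (fun i => (φ i - 1) * x i)]
    simp
  rw [this]
  simp only [sub_mul, Finset.sum_sub_distrib, one_mul]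
  field_simp

lemma Am_shift (x : ZMod p → K) (h0 : ∑ i, x i ≠ 0) (m : ℕ) :
    Am φ (fun i => x (i + 1)) m = Am φ x m := by
  unfold Am
  rw [mu_shift φ x h0, ← sum_shift (fun i => (φ i - mu φ x) ^ m * x i)]
  refine Finset.sum_congr rfl fun i _ => ?_
  rw [map_add, map_one]
  ring

lemma mu_unit (a : (ZMod p)ˣ) (x : ZMod p → K) :
    mu φ (fun i => x (a * i)) = φ (a⁻¹ : (ZMod p)ˣ) * mu φ x := by
  unfold mu
  rw [sum_mul_unit a x]
  have : ∑ i, φ i * x (a * i) = ∑ i, (φ (a⁻¹ : (ZMod p)ˣ) * φ i) * x i := by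
    rw [← sum_mul_unit a (fun i => (φ (a⁻¹ : (ZMod p)ˣ) * φ i) * x i)]
    refine Finset.sum_congr rfl fun i _ => ?_
    rw [← map_mul, Units.inv_mul_cancel_left]
  rw [this, ← mul_div_assoc, Finset.mul_sum]
  simp only [mul_assoc]

lemma Am_unit (a : (ZMod p)ˣ) (x : ZMod p → K) (m : ℕ) :
    Am φ (fun i => x (a * i)) m = φ (a⁻¹ : (ZMod p)ˣ) ^ m * Am φ x m := by
  unfold Am
  rw [mu_unit, Finset.mul_sum,
    ← sum_mul_unit a (fun i => φ (a⁻¹ : (ZMod p)ˣ) ^ m * ((φ i - mu φ x) ^ m * x i))]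
  refine Finset.sum_congr rfl fun i _ => ?_
  rw [← mul_assoc, ← mul_pow, mul_sub, ← map_mul, Units.inv_mul_cancel_left]

lemma mu_neg (x : ZMod p → K) : mu φ (fun i => x (-i)) = - mu φ x := by
  have := mu_unit φ (-1) x
  simpa using this

lemma Am_neg (x : ZMod p → K) (m : ℕ) :
    Am φ (fun i => x (-i)) m = (-1) ^ m * Am φ x m := by
  have := Am_unit φ (-1) x m
  simpa using this

lemma Am_one (x : ZMod p → K) (h0 : ∑ i, x i ≠ 0) : Am φ x 1 = 0 := by
  unfold Am
  simp only [pow_one, sub_mul, Finset.sum_sub_distrib, ← Finset.mul_sum]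
  unfold mu
  field_simp
  simp

lemma recover (x : ZMod p → K) (i₀ : ZMod p) :
    x i₀ = Am φ x 0 - ∑ m ∈ Finset.range p,
      Am φ x m * (mu φ x - φ i₀) ^ (p - 1 - m) * ((p - 1).choose m : K) := by
  have hp1 : p - 1 + 1 = p := Nat.sub_add_cancel (Fact.out : p.Prime).one_lt.le
  have h1 : ∀ i : ZMod p, ∑ m ∈ Finset.range p, (φ i - mu φ x) ^ m *
      (mu φ x - φ i₀) ^ (p - 1 - m) * ((p - 1).choose m : K) = φ (i - i₀) ^ (p - 1) := by
    intro i
    have := add_pow (φ i - mu φ x) (mu φ x - φ i₀) (p - 1)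
    rw [hp1] at this
    rw [← this, map_sub]
    ring
  have h2 : ∑ m ∈ Finset.range p,
      Am φ x m * (mu φ x - φ i₀) ^ (p - 1 - m) * ((p - 1).choose m : K)
      = ∑ i, φ (i - i₀) ^ (p - 1) * x i := by
    unfold Am
    simp only [Finset.sum_mul]
    rw [Finset.sum_comm]
    refine Finset.sum_congr rfl fun i _ => ?_
    rw [← h1, Finset.sum_mul]
    refine Finset.sum_congr rfl fun m _ => ?_
    ring
  rw [h2]
  simp only [Am, pow_zero, one_mul]
  rw [← Finset.sum_sub_distrib, Finset.sum_eq_single i₀]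
  · have : p - 1 ≠ 0 := by have := (Fact.out : p.Prime).two_le; omega
    simp [this]
  · intro i _ hi
    rw [← map_pow, ZMod.pow_card_sub_one_eq_one (sub_ne_zero.2 hi)]
    simp
  · simp

end moments

section main
variable {k K : Type*} [Field k] [Field K] [Algebra k K]

lemma step' (A : Set K) (α x b c : K) (n : ℕ) (hn : 2 ≤ n)
    (hb : b ∈ IntermediateField.adjoin k A) (hc : c ∈ IntermediateField.adjoin k A)
    (hα : α ^ n = b * α + c)
    (hx : x ∈ IntermediateField.adjoin k (A ∪ {α}))
    (τ : K ≃ₐ[k] K) (hA : ∀ y ∈ A, τ y = y) (hτx : τ x = x)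
    (hinj : ∀ i < n, ∀ j < n, (τ ^ i) α = (τ ^ j) α → i = j) :
    x ∈ IntermediateField.adjoin k A := by
  have hpow : ∀ y, τ y = y → ∀ i : ℕ, (τ ^ i) y = y := by
    intro y hy i
    have : τ ∈ MulAction.stabilizer (K ≃ₐ[k] K) y := hy
    exact pow_mem this i
  refine step A α x b c n hn hb hc hα hx (fun i => τ ^ (i : ℕ)) (fun i y hy => hpow y (hA y hy) i)
    (fun i => hpow x hτx i) ?_
  intro i j hij
  exact Fin.ext (hinj i i.2 j j.2 hij)

lemma nonvan (p : ℕ) [Fact p.Prime] [CharP k p] (φ : ZMod p →+* K) (ψ : ZMod p →+* k)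
    (hφ : ∀ i, φ i = algebraMap k K (ψ i))
    (X : (ZMod p ⊕ ZMod p) → K) (hX : AlgebraicIndependent k X) :
    (∑ i, X (inl i) ≠ 0) ∧ (∑ i, X (inr i) ≠ 0) ∧
    (mu φ (fun i => X (inl i)) ^ p - mu φ (fun i => X (inl i)) ≠ 0) ∧
    (mu φ (fun i => X (inl i)) ^ p - mu φ (fun i => X (inl i))) ^ 2 +
    (mu φ (fun i => X (inr i)) ^ p - mu φ (fun i => X (inr i))) ^ 2 ≠ 0 := by
  classical
  have hp : p.Prime := Fact.out
  let e : MvPolynomial (ZMod p ⊕ ZMod p) k →ₐ[k] Polynomial k := MvPolynomial.aeval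
    (Sum.elim (fun i => (if i = 0 then 1 - Polynomial.X else 0) + (if i = 1 then Polynomial.X else 0))
      (fun i => if i = 0 then 1 else 0))
  have key : ∀ P, e P ≠ 0 → MvPolynomial.aeval X P ≠ 0 := by
    intro P hP h0
    apply hP
    have : P = 0 := hX (by rw [h0, map_zero])
    rw [this, map_zero]
  let U0 : MvPolynomial (ZMod p ⊕ ZMod p) k := ∑ i, MvPolynomial.X (inl i)
  let V0 : MvPolynomial (ZMod p ⊕ ZMod p) k := ∑ i, MvPolynomial.X (inr i)
  let U1 : MvPolynomial (ZMod p ⊕ ZMod p) k := ∑ i, MvPolynomial.C (ψ i) * MvPolynomial.X (inl i)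
  let V1 : MvPolynomial (ZMod p ⊕ ZMod p) k := ∑ i, MvPolynomial.C (ψ i) * MvPolynomial.X (inr i)
  have eU0 : e U0 = 1 := by
    simp [e, U0, Finset.sum_add_distrib]
  have eV0 : e V0 = 1 := by
    simp [e, V0]
  have eU1 : e U1 = Polynomial.X := by
    simp [e, U1, mul_add, Finset.sum_add_distrib]
  have eV1 : e V1 = 0 := by
    simp [e, V1]
  have aU0 : MvPolynomial.aeval X U0 = ∑ i, X (inl i) := by simp [U0]
  have aV0 : MvPolynomial.aeval X V0 = ∑ i, X (inr i) := by simp [V0]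
  have aU1 : MvPolynomial.aeval X U1 = ∑ i, φ i * X (inl i) := by
    simp [U1, hφ]
  have aV1 : MvPolynomial.aeval X V1 = ∑ i, φ i * X (inr i) := by
    simp [V1, hφ]
  have hu0 : ∑ i, X (inl i) ≠ 0 := by rw [← aU0]; exact key _ (by rw [eU0]; exact one_ne_zero)
  have hv0 : ∑ i, X (inr i) ≠ 0 := by rw [← aV0]; exact key _ (by rw [eV0]; exact one_ne_zero)
  have hZ : (Polynomial.X ^ p - Polynomial.X : Polynomial k) ≠ 0 :=
    FiniteField.X_pow_card_sub_X_ne_zero k hp.one_lt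
  refine ⟨hu0, hv0, ?_, ?_⟩
  · have h := key (U1 ^ p * U0 - U1 * U0 ^ p) (by simp [eU0, eU1, hZ])
    simp only [map_sub, map_mul, map_pow, aU0, aU1] at h
    intro h0
    apply h
    unfold mu at h0
    generalize (∑ i, φ i * X (inl i)) = u1 at *
    generalize (∑ i, X (inl i)) = u0 at *
    have : u1 ^ p * u0 - u1 * u0 ^ p = ((u1 / u0) ^ p - u1 / u0) * (u0 ^ p * u0) := by
      rw [div_pow]; field_simp
    rw [this, h0, zero_mul]
  · have h := key (((U1 ^ p * U0 - U1 * U0 ^ p) * (V0 ^ p * V0)) ^ 2 +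
      ((V1 ^ p * V0 - V1 * V0 ^ p) * (U0 ^ p * U0)) ^ 2)
      (by simp [eU0, eU1, eV0, eV1, hZ, hp.ne_zero])
    simp only [map_add, map_sub, map_mul, map_pow, aU0, aU1, aV0, aV1] at h
    intro h0
    apply h
    unfold mu at h0
    generalize (∑ i, φ i * X (inl i)) = u1 at *
    generalize (∑ i, X (inl i)) = u0 at *
    generalize (∑ i, φ i * X (inr i)) = v1 at *
    generalize (∑ i, X (inr i)) = v0 at *
    have h1 : u1 ^ p * u0 - u1 * u0 ^ p = ((u1 / u0) ^ p - u1 / u0) * (u0 ^ p * u0) := by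
      rw [div_pow]; field_simp
    have h2 : v1 ^ p * v0 - v1 * v0 ^ p = ((v1 / v0) ^ p - v1 / v0) * (v0 ^ p * v0) := by
      rw [div_pow]; field_simp
    rw [h1, h2]
    linear_combination ((u0 ^ p * u0) * (v0 ^ p * v0)) ^ 2 * h0

theorem main (p : ℕ) [Fact p.Prime] (hodd : Odd p) [CharP k p]
    (a : (ZMod p)ˣ) (hgen : ∀ u : (ZMod p)ˣ, u ∈ Subgroup.zpowers a)
    (X : (ZMod p ⊕ ZMod p) → K) (hX : AlgebraicIndependent k X)
    (htop : IntermediateField.adjoin k (Set.range X) = ⊤)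
    (σ₁ σ₂ l₁ ρ : K ≃ₐ[k] K)
    (hσ₁ : ∀ i : ZMod p, σ₁ (X (inl i)) = X (inl (i + 1)) ∧ σ₁ (X (inr i)) = X (inr i))
    (hσ₂ : ∀ i : ZMod p, σ₂ (X (inl i)) = X (inl i) ∧ σ₂ (X (inr i)) = X (inr (i + 1)))
    (hl₁ : ∀ i : ZMod p, l₁ (X (inl i)) = X (inr (-i)) ∧ l₁ (X (inr i)) = X (inl i))
    (hρ : ∀ i : ZMod p, ρ (X (inl i)) = X (inl ((a : ZMod p) * i)) ∧
      ρ (X (inr i)) = X (inr ((a : ZMod p) * i))) :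
    ∃ g : (ZMod p ⊕ ZMod p) → K, AlgebraicIndependent k g ∧
      IntermediateField.fixedField (Subgroup.closure {σ₁, σ₂, l₁, ρ}) =
        IntermediateField.adjoin k (Set.range g) := by
  classical
  have hp : p.Prime := Fact.out
  have hp3 : 3 ≤ p := by
    have := hp.two_le
    rcases hodd with ⟨m, hm⟩
    omega
  have : CharP K p := charP_of_injective_algebraMap (algebraMap k K).injective p
  have : ExpChar K p := ExpChar.prime hp
  let ψ : ZMod p →+* k := ZMod.castHom dvd_rfl k
  let φ : ZMod p →+* K := (algebraMap k K).comp ψ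
  have hφ : ∀ i, φ i = algebraMap k K (ψ i) := fun i => rfl
  have hτφ : ∀ (τ : K ≃ₐ[k] K) i, (τ : K →+* K) (φ i) = φ i := fun τ i => τ.commutes _
  let x : ZMod p → K := fun i => X (inl i)
  let y : ZMod p → K := fun i => X (inr i)
  obtain ⟨hu0, hv0, hS0, hST⟩ := nonvan p φ ψ hφ X hX
  obtain ⟨s, hs⟩ : ∃ s, s = mu φ x := ⟨_, rfl⟩
  obtain ⟨t, ht⟩ : ∃ t, t = mu φ y := ⟨_, rfl⟩
  obtain ⟨A, hA⟩ : ∃ A, A = Am φ x := ⟨_, rfl⟩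
  obtain ⟨B, hB⟩ : ∃ B, B = Am φ y := ⟨_, rfl⟩
  -- the action on the means and moments
  have s1s : σ₁ s = s - 1 := by
    have := map_mu φ (σ₁ : K →+* K) (hτφ σ₁) x
    simp only [x, RingHom.coe_coe, (hσ₁ _).1] at this
    rw [hs, this]; exact mu_shift φ x hu0
  have s1t : σ₁ t = t := by
    have := map_mu φ (σ₁ : K →+* K) (hτφ σ₁) y
    simp only [y, RingHom.coe_coe, (hσ₁ _).2] at this
    rw [ht, this]
  have s1A : ∀ m, σ₁ (A m) = A m := by
    intro m
    have := map_Am φ (σ₁ : K →+* K) (hτφ σ₁) x m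
    simp only [x, RingHom.coe_coe, (hσ₁ _).1] at this
    rw [hA, this]; exact Am_shift φ x hu0 m
  have s1B : ∀ m, σ₁ (B m) = B m := by
    intro m
    have := map_Am φ (σ₁ : K →+* K) (hτφ σ₁) y m
    simp only [y, RingHom.coe_coe, (hσ₁ _).2] at this
    rw [hB, this]
  have s2s : σ₂ s = s := by
    have := map_mu φ (σ₂ : K →+* K) (hτφ σ₂) x
    simp only [x, RingHom.coe_coe, (hσ₂ _).1] at this
    rw [hs, this]
  have s2t : σ₂ t = t - 1 := by
    have := map_mu φ (σ₂ : K →+* K) (hτφ σ₂) y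
    simp only [y, RingHom.coe_coe, (hσ₂ _).2] at this
    rw [ht, this]; exact mu_shift φ y hv0
  have s2A : ∀ m, σ₂ (A m) = A m := by
    intro m
    have := map_Am φ (σ₂ : K →+* K) (hτφ σ₂) x m
    simp only [x, RingHom.coe_coe, (hσ₂ _).1] at this
    rw [hA, this]
  have s2B : ∀ m, σ₂ (B m) = B m := by
    intro m
    have := map_Am φ (σ₂ : K →+* K) (hτφ σ₂) y m
    simp only [y, RingHom.coe_coe, (hσ₂ _).2] at this
    rw [hB, this]; exact Am_shift φ y hv0 m
  have ls : l₁ s = -t := by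
    have := map_mu φ (l₁ : K →+* K) (hτφ l₁) x
    simp only [x, RingHom.coe_coe, (hl₁ _).1] at this
    rw [hs, this, ht]; exact mu_neg φ y
  have lt : l₁ t = s := by
    have := map_mu φ (l₁ : K →+* K) (hτφ l₁) y
    simp only [y, RingHom.coe_coe, (hl₁ _).2] at this
    rw [ht, this, hs]
  have lA : ∀ m, l₁ (A m) = (-1) ^ m * B m := by
    intro m
    have := map_Am φ (l₁ : K →+* K) (hτφ l₁) x m
    simp only [x, RingHom.coe_coe, (hl₁ _).1] at this
    rw [hA, this, hB]; exact Am_neg φ y m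
  have lB : ∀ m, l₁ (B m) = A m := by
    intro m
    have := map_Am φ (l₁ : K →+* K) (hτφ l₁) y m
    simp only [y, RingHom.coe_coe, (hl₁ _).2] at this
    rw [hB, this, hA]
  obtain ⟨b, hb⟩ : ∃ b, b = φ (a⁻¹ : (ZMod p)ˣ) := ⟨_, rfl⟩
  have rs : ρ s = b * s := by
    have := map_mu φ (ρ : K →+* K) (hτφ ρ) x
    simp only [x, RingHom.coe_coe, (hρ _).1] at this
    rw [hs, this, hb]; exact mu_unit φ a x
  have rt : ρ t = b * t := by
    have := map_mu φ (ρ : K →+* K) (hτφ ρ) y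
    simp only [y, RingHom.coe_coe, (hρ _).2] at this
    rw [ht, this, hb]; exact mu_unit φ a y
  have rA : ∀ m, ρ (A m) = b ^ m * A m := by
    intro m
    have := map_Am φ (ρ : K →+* K) (hτφ ρ) x m
    simp only [x, RingHom.coe_coe, (hρ _).1] at this
    rw [hA, this, hb]; exact Am_unit φ a x m
  have rB : ∀ m, ρ (B m) = b ^ m * B m := by
    intro m
    have := map_Am φ (ρ : K →+* K) (hτφ ρ) y m
    simp only [y, RingHom.coe_coe, (hρ _).2] at this
    rw [hB, this, hb]; exact Am_unit φ a y m
  have hb0 : b ≠ 0 := by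
    rw [hb]; exact (map_ne_zero φ).2 (Units.ne_zero _)
  have hbp1 : b ^ (p - 1) = 1 := by
    rw [hb, ← map_pow, ZMod.pow_card_sub_one_eq_one (Units.ne_zero _), map_one]
  have hbp : b ^ p = b := by
    rw [hb, ← map_pow, ZMod.pow_card]
  have hbinj : ∀ i < p - 1, ∀ j < p - 1, b ^ i = b ^ j → i = j := by
    intro i hi j hj hij
    have ho : orderOf (a⁻¹) = p - 1 := by
      rw [orderOf_inv, orderOf_eq_card_of_forall_mem_zpowers hgen, Nat.card_eq_fintype_card,
        ZMod.card_units]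
    rw [hb, ← map_pow, ← map_pow] at hij
    have h1 := φ.injective hij
    have h2 : (a⁻¹) ^ i = (a⁻¹) ^ j := by
      apply Units.ext
      rw [Units.val_pow_eq_pow_val, Units.val_pow_eq_pow_val]
      exact h1
    exact pow_injOn_Iio_orderOf (by simpa [ho] using hi) (by simpa [ho] using hj) h2
  -- the additive polynomials
  obtain ⟨S, hS⟩ : ∃ S, S = s ^ p - s := ⟨_, rfl⟩
  obtain ⟨T, hT⟩ : ∃ T, T = t ^ p - t := ⟨_, rfl⟩
  replace hS0 : S ≠ 0 := by rw [hS, hs]; exact hS0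
  replace hST : S ^ 2 + T ^ 2 ≠ 0 := by rw [hS, hs, hT, ht]; exact hST
  have s1S : σ₁ S = S := by
    rw [hS, map_sub, map_pow, s1s, sub_pow_expChar]; ring
  have s1T : σ₁ T = T := by rw [hT, map_sub, map_pow, s1t]
  have s2S : σ₂ S = S := by rw [hS, map_sub, map_pow, s2s]
  have s2T : σ₂ T = T := by
    rw [hT, map_sub, map_pow, s2t, sub_pow_expChar]; ring
  have lS : l₁ S = -T := by
    rw [hS, map_sub, map_pow, ls, hT, hodd.neg_pow]; ring
  have lT : l₁ T = S := by rw [hS, hT, map_sub, map_pow, lt]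
  have rS : ρ S = b * S := by
    rw [hS, map_sub, map_pow, rs, mul_pow, hbp]; ring
  have rT : ρ T = b * T := by
    rw [hT, map_sub, map_pow, rt, mul_pow, hbp]; ring
  have hT0 : T ≠ 0 := by
    intro h
    rw [h, map_zero] at lT
    exact hS0 lT.symm
  -- the ratio
  obtain ⟨r, hr⟩ : ∃ r, r = S / T := ⟨_, rfl⟩
  have hr0 : r ≠ 0 := by rw [hr]; exact div_ne_zero hS0 hT0
  have hr2 : r ^ 2 + 1 ≠ 0 := by
    intro h
    apply hST
    have : S ^ 2 + T ^ 2 = (r ^ 2 + 1) * T ^ 2 := by rw [hr]; field_simp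
    rw [this, h, zero_mul]
  have hSr : S = r * T := by rw [hr]; field_simp
  have s1r : σ₁ r = r := by rw [hr, map_div₀, s1S, s1T]
  have s2r : σ₂ r = r := by rw [hr, map_div₀, s2S, s2T]
  have rr : ρ r = r := by rw [hr, map_div₀, rS, rT]; field_simp
  have lr : l₁ r = -r⁻¹ := by rw [hr, map_div₀, lS, lT]; field_simp
  obtain ⟨q, hq⟩ : ∃ q, q = r - r⁻¹ := ⟨_, rfl⟩
  obtain ⟨N, hN⟩ : ∃ N, N = (S ^ 2 + T ^ 2) ^ ((p - 1) / 2) := ⟨_, rfl⟩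
  obtain ⟨C, hC⟩ : ∃ C : ℕ → K, C = fun m => A m / S ^ m := ⟨_, rfl⟩
  obtain ⟨D, hD⟩ : ∃ D : ℕ → K, D = fun m => B m / T ^ m := ⟨_, rfl⟩
  have hhalf : 2 * ((p - 1) / 2) = p - 1 := by
    rcases hodd with ⟨m, hm⟩
    omega
  have s1q : σ₁ q = q := by rw [hq, map_sub, map_inv₀, s1r]
  have s2q : σ₂ q = q := by rw [hq, map_sub, map_inv₀, s2r]
  have rq : ρ q = q := by rw [hq, map_sub, map_inv₀, rr]
  have lq : l₁ q = q := by rw [hq, map_sub, map_inv₀, lr]; field_simp; ring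
  have s1N : σ₁ N = N := by rw [hN, map_pow, map_add, map_pow, map_pow, s1S, s1T]
  have s2N : σ₂ N = N := by rw [hN, map_pow, map_add, map_pow, map_pow, s2S, s2T]
  have lN : l₁ N = N := by
    rw [hN, map_pow, map_add, map_pow, map_pow, lS, lT]; congr 1; ring
  have rN : ρ N = N := by
    rw [hN, map_pow, map_add, map_pow, map_pow, rS, rT]
    have : (b * S) ^ 2 + (b * T) ^ 2 = b ^ 2 * (S ^ 2 + T ^ 2) := by ring
    rw [this, mul_pow, ← pow_mul, hhalf, hbp1, one_mul]
  have s1C : ∀ m, σ₁ (C m) = C m := fun m => by simp only [hC, map_div₀, map_pow, s1A, s1S]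
  have s2C : ∀ m, σ₂ (C m) = C m := fun m => by simp only [hC, map_div₀, map_pow, s2A, s2S]
  have s1D : ∀ m, σ₁ (D m) = D m := fun m => by simp only [hD, map_div₀, map_pow, s1B, s1T]
  have s2D : ∀ m, σ₂ (D m) = D m := fun m => by simp only [hD, map_div₀, map_pow, s2B, s2T]
  have rC : ∀ m, ρ (C m) = C m := fun m => by
    simp only [hC, map_div₀, map_pow, rA, rS, mul_pow]
    exact mul_div_mul_left _ _ (pow_ne_zero _ hb0)
  have rD : ∀ m, ρ (D m) = D m := fun m => by
    simp only [hD, map_div₀, map_pow, rB, rT, mul_pow]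
    exact mul_div_mul_left _ _ (pow_ne_zero _ hb0)
  have lC : ∀ m, l₁ (C m) = D m := fun m => by
    simp only [hC, hD, map_div₀, map_pow, lA, lS]
    rw [neg_pow T]
    exact mul_div_mul_left _ _ (pow_ne_zero _ (neg_ne_zero.2 one_ne_zero))
  have lD : ∀ m, l₁ (D m) = C m := fun m => by
    simp only [hC, hD, map_div₀, map_pow, lB, lT]
  -- the generators
  obtain ⟨g, hg⟩ : ∃ g : (ZMod p ⊕ ZMod p) → K, g = Sum.elim
      (fun j => if j = 1 then q else C j.val + D j.val)
      (fun j => if j = 1 then N else r * C j.val - r⁻¹ * D j.val) := ⟨_, rfl⟩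
  have s1g : ∀ v, σ₁ (g v) = g v := by
    rintro (j | j) <;> simp only [hg, Sum.elim_inl, Sum.elim_inr] <;> split_ifs <;>
      simp only [map_sub, map_add, map_mul, map_inv₀, s1q, s1N, s1C, s1D, s1r]
  have s2g : ∀ v, σ₂ (g v) = g v := by
    rintro (j | j) <;> simp only [hg, Sum.elim_inl, Sum.elim_inr] <;> split_ifs <;>
      simp only [map_sub, map_add, map_mul, map_inv₀, s2q, s2N, s2C, s2D, s2r]
  have rg : ∀ v, ρ (g v) = g v := by
    rintro (j | j) <;> simp only [hg, Sum.elim_inl, Sum.elim_inr] <;> split_ifs <;>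
      simp only [map_sub, map_add, map_mul, map_inv₀, rq, rN, rC, rD, rr]
  have lg : ∀ v, l₁ (g v) = g v := by
    rintro (j | j) <;> simp only [hg, Sum.elim_inl, Sum.elim_inr] <;> split_ifs <;>
      simp only [map_sub, map_add, map_mul, map_inv₀, lq, lN, lC, lD, lr]
    · ring
    · rw [inv_neg, inv_inv]; ring
  -- polynomial equations
  have er : r ^ 2 = q * r + 1 := by rw [hq]; field_simp; ring
  have eT : T ^ (p - 1) = 0 * T + N / (r ^ 2 + 1) ^ ((p - 1) / 2) := by
    have : S ^ 2 + T ^ 2 = (r ^ 2 + 1) * T ^ 2 := by rw [hSr]; ring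
    rw [hN, this, mul_pow, ← pow_mul, hhalf, zero_mul, zero_add,
      mul_div_cancel_left₀ _ (pow_ne_zero _ hr2)]
  have es : s ^ p = 1 * s + r * T := by rw [← hSr, hS]; ring
  have et : t ^ p = 1 * t + T := by rw [hT]; ring
  -- membership facts for a field containing g, r, T, s, t
  have hmq : ∀ E : IntermediateField k K, (∀ v, g v ∈ E) → q ∈ E := by
    intro E hE
    have := hE (inl 1)
    simpa [hg] using this
  have hmN : ∀ E : IntermediateField k K, (∀ v, g v ∈ E) → N ∈ E := by
    intro E hE
    have := hE (inr 1)
    simpa [hg] using this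
  have hmc : ∀ E : IntermediateField k K, (∀ v, g v ∈ E) → r ∈ E →
      N / (r ^ 2 + 1) ^ ((p - 1) / 2) ∈ E := by
    intro E hE hr
    exact E.div_mem (hmN E hE) (pow_mem (E.add_mem (pow_mem hr _) E.one_mem) _)
  have hfull : ∀ E : IntermediateField k K, (∀ v, g v ∈ E) → r ∈ E → T ∈ E → s ∈ E → t ∈ E →
      E = ⊤ := by
    intro E hE hrE hTE hsE htE
    have hSE : S ∈ E := by rw [hSr]; exact E.mul_mem hrE hTE
    have hCD : ∀ m < p, m ≠ 1 → C m ∈ E ∧ D m ∈ E := by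
      intro m hm hm1
      have hval : (m : ZMod p).val = m := ZMod.val_cast_of_lt hm
      have hne : (m : ZMod p) ≠ 1 := by
        intro h
        apply hm1
        rw [← hval, h, ZMod.val_one'' (by omega)]
      have h1 := hE (inl (m : ZMod p))
      have h2 := hE (inr (m : ZMod p))
      simp only [hg, Sum.elim_inl, Sum.elim_inr, if_neg hne, hval] at h1 h2
      have hCm : C m = (r * (r * C m - r⁻¹ * D m) + (C m + D m)) / (r ^ 2 + 1) := by
        field_simp; ring
      have hCE : C m ∈ E := by
        rw [hCm]
        exact E.div_mem (E.add_mem (E.mul_mem hrE h2) h1) (E.add_mem (pow_mem hrE _) E.one_mem)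
      refine ⟨hCE, ?_⟩
      have := E.sub_mem h1 hCE
      rwa [add_sub_cancel_left] at this
    have hAE : ∀ m < p, A m ∈ E := by
      intro m hm
      by_cases hm1 : m = 1
      · rw [hm1, hA, Am_one φ x hu0]; exact E.zero_mem
      · have : A m = C m * S ^ m := by rw [hC]; field_simp
        rw [this]
        exact E.mul_mem (hCD m hm hm1).1 (pow_mem hSE _)
    have hBE : ∀ m < p, B m ∈ E := by
      intro m hm
      by_cases hm1 : m = 1
      · rw [hm1, hB, Am_one φ y hv0]; exact E.zero_mem
      · have : B m = D m * T ^ m := by rw [hD]; field_simp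
        rw [this]
        exact E.mul_mem (hCD m hm hm1).2 (pow_mem hTE _)
    have hφE : ∀ i, φ i ∈ E := fun i => E.algebraMap_mem _
    rw [← top_le_iff, ← htop, IntermediateField.adjoin_le_iff]
    rintro _ ⟨v | v, rfl⟩
    · have := recover φ x v
      rw [← hs, ← hA] at this
      change x v ∈ E
      rw [this]
      refine E.sub_mem (hAE 0 hp.pos) (sum_mem fun m hm => ?_)
      exact E.mul_mem (E.mul_mem (hAE m (Finset.mem_range.1 hm))
        (pow_mem (E.sub_mem hsE (hφE _)) _)) (natCast_mem E _)
    · have := recover φ y v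
      rw [← ht, ← hB] at this
      change y v ∈ E
      rw [this]
      refine E.sub_mem (hBE 0 hp.pos) (sum_mem fun m hm => ?_)
      exact E.mul_mem (E.mul_mem (hBE m (Finset.mem_range.1 hm))
        (pow_mem (E.sub_mem htE (hφE _)) _)) (natCast_mem E _)
  refine ⟨g, ?_, ?_⟩
  · apply algIndep_of_gen X g hX
    set E := IntermediateField.adjoin k (Set.range g)
    have hgE : ∀ v, g v ∈ (algebraicClosure E K).restrictScalars k := by
      intro v
      have : g v ∈ E := IntermediateField.subset_adjoin _ _ ⟨v, rfl⟩
      exact (algebraicClosure E K).algebraMap_mem ⟨g v, this⟩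
    have hrE := alg_of_pow E r q 1 2 le_rfl (hmq _ hgE) (one_mem _) er
    have hTE := alg_of_pow E T 0 _ (p - 1) (by omega) (zero_mem _) (hmc _ hgE hrE) eT
    have hsE := alg_of_pow E s 1 _ p hp.two_le (one_mem _) (mul_mem hrE hTE) es
    have htE := alg_of_pow E t 1 _ p hp.two_le (one_mem _) hTE et
    exact hfull _ hgE hrE hTE hsE htE
  · apply le_antisymm
    · intro z hz
      rw [IntermediateField.mem_fixedField_iff] at hz
      have hz1 : σ₁ z = z := hz _ (Subgroup.subset_closure (by simp))
      have hz2 : σ₂ z = z := hz _ (Subgroup.subset_closure (by simp))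
      have hzl : l₁ z = z := hz _ (Subgroup.subset_closure (by simp))
      have hzr : ρ z = z := hz _ (Subgroup.subset_closure (by simp))
      have hcast : ∀ i < p, ∀ j < p, (i : K) = (j : K) → i = j := by
        intro i hi j hj hij
        exact CharP.natCast_injOn_Iio K p hi hj hij
      set R := Set.range g with hR
      have mem : ∀ (W : Set K) (w : K), w ∈ W → w ∈ IntermediateField.adjoin k W :=
        fun W w hw => IntermediateField.subset_adjoin _ _ hw
      have h4 : z ∈ IntermediateField.adjoin k (R ∪ {r} ∪ {T} ∪ {s} ∪ {t}) := by
        rw [hfull _ (fun v => mem _ _ (by simp [hR])) (mem _ _ (by simp)) (mem _ _ (by simp))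
          (mem _ _ (by simp)) (mem _ _ (by simp))]
        trivial
      have h3 : z ∈ IntermediateField.adjoin k (R ∪ {r} ∪ {T} ∪ {s}) := by
        refine step' _ t z 1 T p hp.two_le (one_mem _) (mem _ _ (by simp)) et h4 σ₂ ?_ hz2 ?_
        · rintro w (((⟨v, rfl⟩ | rfl) | rfl) | rfl)
          exacts [s2g v, s2r, s2T, s2s]
        · have : ∀ i : ℕ, (σ₂ ^ i) t = t - i := by
            intro i
            induction i with
            | zero => simp
            | succ i ih =>
              rw [pow_succ', AlgEquiv.mul_apply, ih, map_sub, s2t, map_natCast]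
              push_cast; ring
          intro i hi j hj hij
          rw [this, this] at hij
          exact hcast i hi j hj (sub_right_injective hij)
      have h2 : z ∈ IntermediateField.adjoin k (R ∪ {r} ∪ {T}) := by
        refine step' _ s z 1 (r * T) p hp.two_le (one_mem _)
          (mul_mem (mem _ _ (by simp)) (mem _ _ (by simp))) es h3 σ₁ ?_ hz1 ?_
        · rintro w ((⟨v, rfl⟩ | rfl) | rfl)
          exacts [s1g v, s1r, s1T]
        · have : ∀ i : ℕ, (σ₁ ^ i) s = s - i := by
            intro i
            induction i with
            | zero => simp
            | succ i ih =>
              rw [pow_succ', AlgEquiv.mul_apply, ih, map_sub, s1s, map_natCast]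
              push_cast; ring
          intro i hi j hj hij
          rw [this, this] at hij
          exact hcast i hi j hj (sub_right_injective hij)
      have h1 : z ∈ IntermediateField.adjoin k (R ∪ {r}) := by
        refine step' _ T z 0 _ (p - 1) (by omega) (zero_mem _)
          (hmc _ (fun v => mem _ _ (by simp [hR])) (mem _ _ (by simp))) eT h2 ρ ?_ hzr ?_
        · rintro w (⟨v, rfl⟩ | rfl)
          exacts [rg v, rr]
        · have rb : ρ b = b := by rw [hb]; exact hτφ ρ _
          have : ∀ i : ℕ, (ρ ^ i) T = b ^ i * T := by
            intro i
            induction i with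
            | zero => simp
            | succ i ih =>
              rw [pow_succ', AlgEquiv.mul_apply, ih, map_mul, rT, map_pow, rb]
              ring
          intro i hi j hj hij
          rw [this, this] at hij
          exact hbinj i hi j hj (mul_right_cancel₀ hT0 hij)
      refine step' _ r z q 1 2 le_rfl (hmq _ (fun v => mem _ _ ⟨v, rfl⟩)) (one_mem _) er h1 l₁
        ?_ hzl ?_
      · rintro w ⟨v, rfl⟩
        exact lg v
      · have hne : r ≠ -r⁻¹ := by
          intro h
          apply hr2
          have : r * r = -r⁻¹ * r := by rw [← h]
          rw [neg_mul, inv_mul_cancel₀ hr0] at this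
          rw [pow_two, this]; ring
        intro i hi j hj hij
        interval_cases i <;> interval_cases j
        · rfl
        · simp only [pow_zero, pow_one, AlgEquiv.one_apply, lr] at hij
          exact absurd hij hne
        · simp only [pow_zero, pow_one, AlgEquiv.one_apply, lr] at hij
          exact absurd hij.symm hne
        · rfl
    · rw [IntermediateField.adjoin_le_iff]
      rintro _ ⟨v, rfl⟩
      rw [SetLike.mem_coe, IntermediateField.mem_fixedField_iff]
      have : Subgroup.closure {σ₁, σ₂, l₁, ρ} ≤ MulAction.stabilizer (K ≃ₐ[k] K) (g v) := by
        rw [Subgroup.closure_le]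
        rintro τ (rfl | rfl | rfl | rfl)
        exacts [s1g v, s2g v, lg v, rg v]
      intro τ hτ
      exact this hτ

end main

end Stmt8

/-- for `p` an odd prime, `char k = p`, and `a` generating
`(ℤ/pℤ)ˣ`, the fixed field of `G = ⟨σ₁, σ₂, λ₁, ρ₁ρ₂⟩` acting on
`k(x₀,…,x_{p-1}, y₀,…,y_{p-1})` by permuting the variables
(`σ₁ : x_i ↦ x_{i+1}`, `σ₂ : y_i ↦ y_{i+1}`, `λ₁ : x_i ↦ y_{-i}, y_i ↦ x_i`,
`ρ₁ρ₂ : x_i ↦ x_{ai}, y_i ↦ y_{ai}`) is purely transcendental over `k`. -/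
theorem stmt8 (k : Type*) [Field k] (p : ℕ) (hp : p.Prime) (hodd : Odd p) [CharP k p]
    (a : (ZMod p)ˣ) (hgen : ∀ u : (ZMod p)ˣ, u ∈ Subgroup.zpowers a)
    (X : (ZMod p ⊕ ZMod p) → FractionRing (MvPolynomial (ZMod p ⊕ ZMod p) k))
    (hX : ∀ v, X v = algebraMap (MvPolynomial (ZMod p ⊕ ZMod p) k)
      (FractionRing (MvPolynomial (ZMod p ⊕ ZMod p) k)) (MvPolynomial.X v))
    (σ₁ σ₂ l₁ ρ : FractionRing (MvPolynomial (ZMod p ⊕ ZMod p) k) ≃ₐ[k]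
      FractionRing (MvPolynomial (ZMod p ⊕ ZMod p) k))
    (hσ₁ : ∀ i : ZMod p, σ₁ (X (inl i)) = X (inl (i + 1)) ∧ σ₁ (X (inr i)) = X (inr i))
    (hσ₂ : ∀ i : ZMod p, σ₂ (X (inl i)) = X (inl i) ∧ σ₂ (X (inr i)) = X (inr (i + 1)))
    (hl₁ : ∀ i : ZMod p, l₁ (X (inl i)) = X (inr (-i)) ∧ l₁ (X (inr i)) = X (inl i))
    (hρ : ∀ i : ZMod p, ρ (X (inl i)) = X (inl ((a : ZMod p) * i)) ∧
      ρ (X (inr i)) = X (inr ((a : ZMod p) * i))) :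
    IsKRational k
      (IntermediateField.fixedField (Subgroup.closure {σ₁, σ₂, l₁, ρ})) := by
  have hF : Fact p.Prime := ⟨hp⟩
  have hXeq : X = fun v => algebraMap (MvPolynomial (ZMod p ⊕ ZMod p) k)
      (FractionRing (MvPolynomial (ZMod p ⊕ ZMod p) k)) (MvPolynomial.X v) := funext hX
  have hind : AlgebraicIndependent k X := by
    rw [hXeq]
    exact (MvPolynomial.algebraicIndependent_X (ZMod p ⊕ ZMod p) k).map'
      (f := IsScalarTower.toAlgHom k _ (FractionRing (MvPolynomial (ZMod p ⊕ ZMod p) k)))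
      (IsFractionRing.injective _ _)
  have htop : IntermediateField.adjoin k (Set.range X) = ⊤ := by
    rw [← top_le_iff]
    intro z _
    have hpoly : ∀ P : MvPolynomial (ZMod p ⊕ ZMod p) k,
        algebraMap _ (FractionRing (MvPolynomial (ZMod p ⊕ ZMod p) k)) P ∈
          IntermediateField.adjoin k (Set.range X) := by
      intro P
      induction P using MvPolynomial.induction_on with
      | C c => exact IntermediateField.algebraMap_mem _ c
      | add P Q h1 h2 => rw [map_add]; exact add_mem h1 h2
      | mul_X P v h =>
        rw [map_mul, ← hX v]
        exact mul_mem h (IntermediateField.subset_adjoin _ _ ⟨v, rfl⟩)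
    obtain ⟨P, Q, _, rfl⟩ := IsFractionRing.div_surjective
      (A := MvPolynomial (ZMod p ⊕ ZMod p) k) z
    exact div_mem (hpoly P) (hpoly Q)
  obtain ⟨g, hg, hE⟩ := Stmt8.main p hodd a hgen X hind htop σ₁ σ₂ l₁ ρ hσ₁ hσ₂ hl₁ hρ
  let e := Fintype.equivFin (ZMod p ⊕ ZMod p)
  have hg' : AlgebraicIndependent k (g ∘ e.symm) := hg.comp _ e.symm.injective
  have hr : Set.range (g ∘ e.symm) = Set.range g := e.symm.surjective.range_comp g
  refine ⟨Fintype.card (ZMod p ⊕ ZMod p), ⟨?_⟩⟩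
  rw [hE, ← hr]
  exact hg'.aevalEquivField.symm
end

section
/- Let p be an odd prime, k a field of characteristic p, a an integer with (ℤ/pℤ)^× = ⟨ā⟩, and d a positive divisor of p−1 with p−1 = de. Let σ, τ be k-automorphisms of k(x₀,…,x_{p-1}) given by σ: x_i ↦ x_{i+1} and τ: x_i ↦ x_{ai} (indices mod p), and G_{pd} := ⟨σ, τ^e⟩. Then the fixed field k(x₀,…,x_{p-1})^{G_{pd}} is purely transcendental over k. -/
set_option maxHeartbeats 1000000
set_option synthInstance.maxHeartbeats 400000

open Finset in
lemma core_gen {K : Type*} [Field K] (p : ℕ) [Fact p.Prime] [CharP K p]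
    (x : ZMod p → K) (u : K) (i : ZMod p) :
    x i = (∑ j, x j) - ∑ l ∈ range (p - 1 + 1),
      (u - (ZMod.castHom (dvd_refl p) K i)) ^ (p - 1 - l) * ((p - 1).choose l : K) *
        ∑ j, ((ZMod.castHom (dvd_refl p) K j) - u) ^ l * x j := by
  simp_rw [mul_sum]
  rw [sum_comm, ← sum_sub_distrib]
  have : ∀ j : ZMod p, x j - ∑ l ∈ range (p - 1 + 1),
      (u - (ZMod.castHom (dvd_refl p) K i)) ^ (p - 1 - l) * ((p - 1).choose l : K) *
        (((ZMod.castHom (dvd_refl p) K j) - u) ^ l * x j) = if j = i then x j else 0 := by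
    intro j
    have h := add_pow ((ZMod.castHom (dvd_refl p) K j) - u) (u - (ZMod.castHom (dvd_refl p) K i)) (p-1)
    have h2 : ∑ l ∈ range (p - 1 + 1),
      (u - (ZMod.castHom (dvd_refl p) K i)) ^ (p - 1 - l) * ((p - 1).choose l : K) *
        (((ZMod.castHom (dvd_refl p) K j) - u) ^ l * x j) = ((ZMod.castHom (dvd_refl p) K (j - i))) ^ (p-1) * x j := by
      rw [map_sub, ← sub_add_sub_cancel (ZMod.castHom (dvd_refl p) K j) u (ZMod.castHom (dvd_refl p) K i), h, sum_mul]
      refine sum_congr rfl fun l _ => by ring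
    rw [h2, ← map_pow]
    split_ifs with hji
    · subst hji
      have : p - 1 ≠ 0 := by have := (Fact.out : p.Prime).two_le; omega
      simp [this]
    · rw [ZMod.pow_card_sub_one_eq_one (sub_ne_zero.2 hji)]; simp
  rw [sum_congr rfl fun j _ => this j]
  simp

lemma v_ne_zero {K : Type*} [Field K] (p : ℕ) [Fact p.Prime] [CharP K p]
    (σ : K →+* K) (u : K) (h : σ u = u - 1) : u ^ p - u ≠ 0 := by
  intro h0
  have h1 := (Subfield.mem_bot_iff_pow_eq_self (F := K) (p := p)).2 (sub_eq_zero.1 h0)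
  have h2 : (⊥ : Subfield K) ≤ RingHom.eqLocusField σ (RingHom.id K) := bot_le
  have := h2 h1
  have h3 : σ u = u := this
  rw [h] at h3
  simp at h3

lemma tb {k K : Type*} [Field k] [Field K] [Algebra k K] (p : ℕ) [Fact p.Prime]
    (x : ZMod p → K) (hx : IsTranscendenceBasis k x) (f : Fin p → K)
    (halg : Algebra.IsAlgebraic (IntermediateField.adjoin k (Set.range f)) K) :
    AlgebraicIndependent k f := by
  have : Algebra.IsAlgebraic (Algebra.adjoin k (Set.range f)) K := by
    constructor
    intro y
    exact IntermediateField.isAlgebraic_adjoin_iff.1 (halg.isAlgebraic y)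
  refine (Algebra.IsAlgebraic.isTranscendenceBasis_of_lift_le_trdeg_of_finite k f ?_).1
  rw [← hx.lift_cardinalMk_eq_trdeg]
  simp

open IntermediateField in
lemma field_eq {k K : Type*} [Field k] [Field K] [Algebra k K] (p d : ℕ) [Fact p.Prime] [CharP K p]
    (hd : 0 < d) (H : Subgroup (K ≃ₐ[k] K)) (σ T : K ≃ₐ[k] K) (hσH : σ ∈ H) (hTH : T ∈ H)
    (β : K) (hβ : orderOf β = d) (hβσ : σ β = β) (hβT : T β = β) (u : K)
    (hσu : σ u = u - 1) (hTu : T u = β * u) (F : IntermediateField k K)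
    (hF : F ≤ fixedField H) (hv : (u ^ p - u) ^ d ∈ F)
    (htop : IntermediateField.adjoin F {u} = ⊤) :
    F = fixedField H ∧ FiniteDimensional F K := by
  have hp : p.Prime := Fact.out
  have hq : ((Polynomial.X : Polynomial F) ^ p - Polynomial.X).Monic := 
    Polynomial.monic_X_pow_sub (by simpa using hp.one_lt)
  have hqd : ((Polynomial.X : Polynomial F) ^ p - Polynomial.X).natDegree = p := 
    FiniteField.X_pow_card_sub_X_natDegree_eq F hp.one_lt
  let P : Polynomial F := (Polynomial.X ^ p - Polynomial.X) ^ d - Polynomial.C ⟨_, hv⟩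
  have hdeg : ((Polynomial.X ^ p - Polynomial.X : Polynomial F) ^ d).natDegree = d * p := by
    rw [hq.natDegree_pow, hqd]
  have hPm : P.Monic := by
    apply (hq.pow d).sub_of_left
    refine lt_of_le_of_lt Polynomial.degree_C_le ?_
    rw [← Polynomial.natDegree_pos_iff_degree_pos, hdeg]
    exact Nat.mul_pos hd hp.pos
  have hPd : P.natDegree ≤ d * p := by
    rw [Polynomial.natDegree_sub_C, hdeg]
  have hPu : Polynomial.aeval u P = 0 := by
    simp [P, IntermediateField.algebraMap_apply]
  have hint : IsIntegral F u := ⟨P, hPm, hPu⟩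
  have hfr : Module.finrank F K ≤ d * p := by
    rw [← IntermediateField.finrank_top', ← htop, IntermediateField.adjoin.finrank hint]
    refine le_trans (Polynomial.natDegree_le_of_dvd (minpoly.dvd F u hPu) hPm.ne_zero) hPd
  have hfin : FiniteDimensional F K := by
    have h1 := IntermediateField.adjoin.finiteDimensional hint
    rw [htop] at h1
    exact LinearEquiv.finiteDimensional (IntermediateField.topEquiv (F := F) (E := K)).toLinearEquiv
  refine ⟨IntermediateField.eq_of_le_of_finrank_le' hF (hfr.trans ?_), hfin⟩
  let : Algebra F (fixedField H) := (IntermediateField.inclusion hF).toAlgebra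
  have : IsScalarTower F (fixedField H) K := IsScalarTower.of_algebraMap_eq fun _ => rfl
  have hfin2 : FiniteDimensional (fixedField H) K := Module.Finite.of_restrictScalars_finite F _ _
  have hint2 : IsIntegral (fixedField H) u := Algebra.IsIntegral.isIntegral u
  refine le_trans ?_ (minpoly.natDegree_le (A := fixedField H) u)
  set Q := minpoly (fixedField H) u with hQ
  have hQ0 : Q.map (algebraMap (fixedField H) K) ≠ 0 := 
    (Polynomial.map_ne_zero_iff (algebraMap (fixedField H) K).injective).2 (minpoly.ne_zero hint2)
  have hroot : ∀ h ∈ H, h u ∈ (Q.map (algebraMap (fixedField H) K)).roots := by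
    intro h hh
    rw [Polynomial.mem_roots hQ0, Polynomial.IsRoot, Polynomial.eval_map_algebraMap]
    have h1 : ∀ R : Polynomial (fixedField H), Polynomial.aeval (h u) R = h (Polynomial.aeval u R) := by
      intro R
      rw [Polynomial.aeval_eq_sum_range, Polynomial.aeval_eq_sum_range, map_sum]
      refine Finset.sum_congr rfl fun i _ => ?_
      rw [Algebra.smul_def, Algebra.smul_def, map_mul, map_pow]
      congr 1
      exact ((mem_fixedField_iff H _).1 (R.coeff i).2 h hh).symm
    rw [h1, hQ, minpoly.aeval, map_zero]
  have hσm : ∀ m : ℕ, (σ ^ m) u = u - m := by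
    intro m
    induction m with
    | zero => simp
    | succ m ih => rw [pow_succ', AlgEquiv.mul_apply, ih, map_sub, hσu, map_natCast]; push_cast; ring
  have hTm : ∀ m : ℕ, (T ^ m) u = β ^ m * u := by
    intro m
    induction m with
    | zero => simp
    | succ m ih => rw [pow_succ', AlgEquiv.mul_apply, ih, map_mul, map_pow, hTu, hβT]; ring
  let g : Fin d × Fin p → K := fun q => β ^ (q.1 : ℕ) * u - ((q.2 : ℕ) : K)
  have hg : Function.Injective g := by
    rintro ⟨i, m⟩ ⟨i', m'⟩ hh
    have h1 : β ^ (i : ℕ) * u - ((m : ℕ) : K) = β ^ (i' : ℕ) * u - ((m' : ℕ) : K) := hh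
    have h2 := congrArg σ h1
    simp only [map_sub, map_mul, map_pow, hβσ, hσu, map_natCast] at h2
    have h3 : β ^ (i : ℕ) = β ^ (i' : ℕ) := by linear_combination h1 - h2
    have h4 : ((m : ℕ) : K) = ((m' : ℕ) : K) := by linear_combination u * h3 - h1
    have h5 : i = i' := by
      apply Fin.ext
      exact pow_injOn_Iio_orderOf (by simp [hβ]) (by simp [hβ]) h3
    have h6 : m = m' := by
      rw [CharP.natCast_eq_natCast K p] at h4
      exact Fin.ext (Nat.ModEq.eq_of_lt_of_lt h4 m.2 m'.2)
    rw [h5, h6]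
  classical
  have hcard : (Finset.univ.image g).card = d * p := by
    rw [Finset.card_image_of_injective _ hg]; simp
  have hsub : Finset.univ.image g ⊆ (Q.map (algebraMap (fixedField H) K)).roots.toFinset := by
    intro y hy
    obtain ⟨⟨i, m⟩, -, rfl⟩ := Finset.mem_image.1 hy
    rw [Multiset.mem_toFinset]
    have := hroot (T ^ (i : ℕ) * σ ^ (m : ℕ)) (H.mul_mem (H.pow_mem hTH _) (H.pow_mem hσH _))
    rwa [AlgEquiv.mul_apply, hσm, map_sub, hTm, map_natCast] at this
  rw [← hcard]
  refine (Finset.card_le_card hsub).trans ((Multiset.toFinset_card_le _).trans ?_)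
  refine (Polynomial.card_roots' _).trans ?_
  rw [Polynomial.natDegree_map]

open IntermediateField in
lemma main_abs {k K : Type*} [Field k] [Field K] [Algebra k K] (p d : ℕ) [Fact p.Prime] [CharP K p]
    (hd : 0 < d) (x : ZMod p → K) (hx : IsTranscendenceBasis k x)
    (htop : IntermediateField.adjoin k (Set.range x) = ⊤) (σ T : K ≃ₐ[k] K)
    (b : (ZMod p)ˣ) (hb : orderOf b = d)
    (hσ : ∀ i, σ (x i) = x (i + 1)) (hT : ∀ i, T (x i) = x (b * i)) :
    ∃ f : Fin p → K, AlgebraicIndependent k f ∧ 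
      IntermediateField.adjoin k (Set.range f) = fixedField (Subgroup.closure {σ, T}) := by
  have hp : p.Prime := Fact.out
  set c := ZMod.castHom (dvd_refl p) K with hc
  have hcσ : ∀ (s : K ≃ₐ[k] K) i, s (c i) = c i := by
    intro s i
    exact congrArg (fun φ : ZMod p →+* K => φ i) 
      (Subsingleton.elim ((s : K →+* K).comp c) c)
  have hy0 : (∑ i, x i) ≠ 0 := by
    intro h
    have := Fintype.linearIndependent_iff.1 hx.1.linearIndependent (fun _ => 1) (by simpa using h) 0
    simp at this
  set y := ∑ i, x i with hy
  have hσy : σ y = y := by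
    rw [hy, map_sum]; simp_rw [hσ]
    exact Equiv.sum_comp (Equiv.addRight (1 : ZMod p)) x
  have hTy : T y = y := by
    rw [hy, map_sum]; simp_rw [hT]
    exact Equiv.sum_comp (Units.mulLeft b) x
  set u := (∑ i, c i * x i) / y with hu
  set β := c (b⁻¹ : (ZMod p)ˣ) with hβ
  have hβb : β * c b = 1 := by rw [hβ, ← map_mul, Units.inv_mul, map_one]
  have hσu : σ u = u - 1 := by
    rw [hu, map_div₀, hσy, map_sum, eq_sub_iff_add_eq, div_add_one hy0]
    congr 1
    have h1 := Equiv.sum_comp (Equiv.addRight (1 : ZMod p)) (fun i => c i * x i)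
    rw [← h1, hy, ← Equiv.sum_comp (Equiv.addRight (1 : ZMod p)) x, ← Finset.sum_add_distrib]
    refine Finset.sum_congr rfl fun i _ => ?_
    simp only [map_mul, hcσ, hσ, map_add, map_one, Equiv.coe_addRight]
    ring
  have hTu : T u = β * u := by
    rw [hu, map_div₀, hTy, map_sum, ← mul_div_assoc]
    congr 1
    rw [← Equiv.sum_comp (Units.mulLeft b) (fun i => c i * x i), Finset.mul_sum]
    refine Finset.sum_congr rfl fun i _ => ?_
    simp only [map_mul, hcσ, hT, Units.mulLeft_apply]
    linear_combination (-(c i) * x (b * i)) * hβb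
  set v := u ^ p - u with hv
  have hv0 : v ≠ 0 := v_ne_zero p (σ : K →+* K) u hσu
  have hσv : σ v = v := by
    rw [hv, map_sub, map_pow, hσu, sub_pow_char]; ring
  have hβp : β ^ p = β := by rw [hβ, ← map_pow, ZMod.pow_card]
  have hTv : T v = β * v := by
    rw [hv, map_sub, map_pow, hTu, mul_pow, hβp]; ring
  have hβ0 : β ≠ 0 := left_ne_zero_of_mul_eq_one hβb
  have hβd : orderOf β = d := by
    have h1 : orderOf β = orderOf ((b⁻¹ : (ZMod p)ˣ) : ZMod p) :=
      orderOf_injective (c : ZMod p →* K) c.injective _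
    rw [h1, orderOf_units, orderOf_inv, hb]
  let z : ℕ → K := fun j => ∑ i, (c i - u) ^ j * x i
  have hz : ∀ j, z j = ∑ i, (c i - u) ^ j * x i := fun _ => rfl
  have hσz : ∀ j, σ (z j) = z j := by
    intro j
    rw [hz, map_sum, ← Equiv.sum_comp (Equiv.addRight (1 : ZMod p)) (fun i => (c i - u) ^ j * x i)]
    refine Finset.sum_congr rfl fun i _ => ?_
    simp only [map_mul, map_pow, map_sub, hcσ, hσu, hσ, map_add, map_one, Equiv.coe_addRight]
    ring
  have hTz : ∀ j, T (z j) = β ^ j * z j := by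
    intro j
    rw [hz, map_sum, ← Equiv.sum_comp (Units.mulLeft b) (fun i => (c i - u) ^ j * x i), Finset.mul_sum]
    refine Finset.sum_congr rfl fun i _ => ?_
    simp only [map_mul, map_pow, map_sub, hcσ, hTu, hT, Units.mulLeft_apply]
    rw [← mul_assoc, ← mul_pow]
    congr 2
    linear_combination (-(c i)) * hβb
  have hz1 : z 1 = 0 := by
    simp only [hz, pow_one, sub_mul, Finset.sum_sub_distrib, ← Finset.mul_sum, ← hy]
    rw [hu, div_mul_cancel₀ _ hy0, sub_self]
  let f : Fin p → K := fun j => if (j : ℕ) = 1 then v ^ d else z j / v ^ (j : ℕ)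
  have hfσ : ∀ j, σ (f j) = f j := by
    intro j
    by_cases hj : (j : ℕ) = 1
    · simp [f, hj, hσv]
    · simp [f, hj, hσv, hσz]
  have hfT : ∀ j, T (f j) = f j := by
    intro j
    by_cases hj : (j : ℕ) = 1
    · simp only [f, hj, if_true, map_pow, hTv, mul_pow]
      rw [← hβd, pow_orderOf_eq_one, one_mul]
    · simp only [f, hj, if_false, map_div₀, map_pow, hTv, hTz, mul_pow]
      rw [mul_div_mul_left _ _ (pow_ne_zero _ hβ0)]
  set F := IntermediateField.adjoin k (Set.range f) with hF
  have hfF : ∀ j, f j ∈ F := fun j => IntermediateField.subset_adjoin _ _ ⟨j, rfl⟩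
  have hvF : v ^ d ∈ F := by
    have := hfF ⟨1, hp.one_lt⟩
    simpa [f] using this
  have hle : F ≤ fixedField (Subgroup.closure {σ, T}) := by
    rw [hF, IntermediateField.adjoin_le_iff]
    rintro _ ⟨j, rfl⟩
    rw [SetLike.mem_coe, mem_fixedField_iff]
    intro h hh
    induction hh using Subgroup.closure_induction with
    | mem s hs => 
      rcases hs with rfl | rfl
      · exact hfσ j
      · exact hfT j
    | one => rfl
    | mul s t _ _ hs ht => rw [AlgEquiv.mul_apply, ht, hs]
    | inv s _ hs => 
      have h1 : (s⁻¹ * s) (f j) = f j := by simp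
      rwa [AlgEquiv.mul_apply, hs] at h1
  have hEtop : IntermediateField.adjoin F {u} = ⊤ := by
    set E := IntermediateField.adjoin F {u} with hE
    have huE : u ∈ E := IntermediateField.mem_adjoin_simple_self F u
    have hFE : ∀ w ∈ F, w ∈ E := fun w hw => E.algebraMap_mem ⟨w, hw⟩
    have hvE : v ∈ E := E.sub_mem (pow_mem huE _) huE
    have hzE : ∀ j < p, z j ∈ E := by
      intro j hj
      by_cases hj1 : j = 1
      · rw [hj1, hz1]; exact E.zero_mem
      · have h1 := hFE _ (hfF ⟨j, hj⟩)
        simp only [f, hj1, if_false] at h1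
        have := E.mul_mem h1 (pow_mem hvE j)
        rwa [div_mul_cancel₀ _ (pow_ne_zero _ hv0)] at this
    have hcE : ∀ i, c i ∈ E := by
      intro i
      obtain ⟨m, rfl⟩ := ZMod.natCast_zmod_surjective i
      rw [map_natCast]; exact E.natCast_mem m
    have hxE : ∀ i, x i ∈ E := by
      intro i
      rw [core_gen p x u i]
      have h0 := hzE 0 hp.pos
      simp only [hz, pow_zero, one_mul] at h0
      refine E.sub_mem h0 (E.sum_mem fun l hl => ?_)
      refine E.mul_mem (E.mul_mem (pow_mem (E.sub_mem huE (hcE i)) _) (E.natCast_mem _)) ?_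
      refine hzE l ?_
      have := hp.pos
      have := Finset.mem_range.1 hl
      omega
    have h1 : IntermediateField.adjoin k (Set.range x) ≤ E.restrictScalars k := by
      rw [IntermediateField.adjoin_le_iff]
      rintro _ ⟨i, rfl⟩
      exact hxE i
    rw [htop] at h1
    rw [eq_top_iff]
    intro w _
    exact h1 (IntermediateField.mem_top (x := w))
  obtain ⟨h1, h2⟩ := field_eq p d hd (Subgroup.closure {σ, T}) σ T 
    (Subgroup.subset_closure (by simp)) (Subgroup.subset_closure (by simp)) β hβd (hcσ _ _) (hcσ _ _)
    u hσu hTu F hle hvF hEtop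
  exact ⟨f, tb p x hx f (Algebra.IsAlgebraic.of_finite F K), h1⟩

/-- Kang–Wang: for `p` an odd prime, `char k = p`, `a` a generator
of `(ℤ/pℤ)ˣ`, and `d` a positive divisor of `p-1` with `p-1 = de`, the fixed
field of `G_{pd} = ⟨σ, τ^e⟩` (where `σ : x_i ↦ x_{i+1}`, `τ : x_i ↦ x_{ai}`)
acting on `k(x₀,…,x_{p-1})` is purely transcendental over `k`. -/
theorem stmt13 (k : Type*) [Field k] (p : ℕ) [Fact p.Prime] (hodd : Odd p) [CharP k p]
    (a : ℤ) (haU : IsUnit (a : ZMod p))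
    (hgen : ∀ u : (ZMod p)ˣ, u ∈ Subgroup.zpowers haU.unit)
    (d e : ℕ) (hd : 0 < d) (hde : d * e = p - 1)
    (x : ZMod p → FractionRing (MvPolynomial (ZMod p) k))
    (hx : ∀ j, x j = algebraMap (MvPolynomial (ZMod p) k)
      (FractionRing (MvPolynomial (ZMod p) k)) (MvPolynomial.X j))
    (σ τ : FractionRing (MvPolynomial (ZMod p) k) ≃ₐ[k]
           FractionRing (MvPolynomial (ZMod p) k))
    (hσ : ∀ i : ZMod p, σ (x i) = x (i + 1))
    (hτ : ∀ i : ZMod p, τ (x i) = x ((a : ZMod p) * i)) :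
    IsKRational k
      (IntermediateField.fixedField (Subgroup.closure {σ, τ ^ e})) := by
  have hp : p.Prime := Fact.out
  have hTB : IsTranscendenceBasis k x := by
    have : Algebra.IsAlgebraic (MvPolynomial (ZMod p) k) (FractionRing (MvPolynomial (ZMod p) k)) :=
      IsLocalization.isAlgebraic _ (nonZeroDivisors (MvPolynomial (ZMod p) k))
    have h := (IsTranscendenceBasis.mvPolynomial (ZMod p) k).algebraMap_comp
      (A := FractionRing (MvPolynomial (ZMod p) k))
    have h2 : x = algebraMap (MvPolynomial (ZMod p) k)
      (FractionRing (MvPolynomial (ZMod p) k)) ∘ MvPolynomial.X := funext hx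
    rw [h2]; exact h
  have htop : IntermediateField.adjoin k (Set.range x) = ⊤ := by
    rw [eq_top_iff]
    intro w _
    have hpoly : ∀ q : MvPolynomial (ZMod p) k, algebraMap (MvPolynomial (ZMod p) k)
        (FractionRing (MvPolynomial (ZMod p) k)) q ∈ IntermediateField.adjoin k (Set.range x) := by
      intro q
      induction q using MvPolynomial.induction_on with
      | C r =>
        have h := (IntermediateField.adjoin k (Set.range x)).algebraMap_mem r
        rwa [IsScalarTower.algebraMap_apply k (MvPolynomial (ZMod p) k)] at h
      | add q r hq hr => rw [map_add]; exact add_mem hq hr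
      | mul_X q i hq =>
        rw [map_mul, ← hx]
        exact mul_mem hq (IntermediateField.subset_adjoin _ _ ⟨i, rfl⟩)
    obtain ⟨q, r, -, rfl⟩ := IsFractionRing.div_surjective (A := MvPolynomial (ZMod p) k) w
    exact div_mem (hpoly q) (hpoly r)
  have hchar : CharP (FractionRing (MvPolynomial (ZMod p) k)) p :=
    charP_of_injective_algebraMap (algebraMap k _).injective p
  have he : e ≠ 0 := by
    rintro rfl
    have := hp.two_le
    omega
  have hord : orderOf (haU.unit ^ e) = d := by
    have h1 : orderOf haU.unit = d * e := by
      rw [orderOf_eq_card_of_forall_mem_zpowers hgen, hde, Nat.card_eq_fintype_card,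
        ZMod.card_units]
    rw [orderOf_pow_of_dvd he (h1 ▸ Dvd.intro_left d rfl), h1,
      Nat.mul_div_cancel _ (Nat.pos_of_ne_zero he)]
  have hT : ∀ (m : ℕ) (i : ZMod p), (τ ^ m) (x i) = x ((haU.unit ^ m : (ZMod p)ˣ) * i) := by
    intro m
    induction m with
    | zero => intro i; simp
    | succ m ih =>
      intro i
      rw [pow_succ', AlgEquiv.mul_apply, ih, hτ]
      congr 1
      push_cast
      rw [IsUnit.unit_spec]
      ring
  obtain ⟨f, hf, hfF⟩ := main_abs p d hd x hTB htop σ (τ ^ e) (haU.unit ^ e) hord hσ (hT e)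
  refine ⟨p, ⟨?_⟩⟩
  rw [← hfF]
  exact hf.aevalEquivField.symm
end

section
/- Let k be a field of characteristic 7, σ := (1,3,5,7,9,11,13)(2,4,6,8,10,12,14) and τ₁ := (1,2)(3,8,5,14,9,12)(4,7,6,13,10,11) acting on k(x₁,…,x₁₄) by permutation of variables, and G := ⟨σ, τ₁⟩, a transitive solvable subgroup of S₁₄ of order 42. Then the fixed field k(x₁,…,x₁₄)^G is purely transcendental over k. -/
set_option maxHeartbeats 1000000
set_option synthInstance.maxHeartbeats 400000

open IntermediateField Polynomial algebraAdjoinAdjoin in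
/-- A criterion: generators of the right number, with degree comparison. -/
theorem rational_of_gens {k L : Type*} [Field k] [Field L] [Algebra k L]
    (F : IntermediateField k L) (g : Fin 14 → L) (hg : ∀ i, g i ∈ F) (t : L)
    (hc : (t ^ 7 - t) ^ 6 ∈ adjoin k (Set.range g))
    (htop : ∀ N : IntermediateField k L, t ∈ N → (∀ i, g i ∈ N) → N = ⊤)
    (hdeg : 42 ≤ (minpoly F t).natDegree) (htr : 14 ≤ Algebra.trdeg k L) :
    IsKRational k F := by
  set M := adjoin k (Set.range g) with hM
  have hMF : M ≤ F := by
    rw [hM, adjoin_le_iff]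
    rintro _ ⟨i, rfl⟩
    exact hg i
  let P : M[X] := (X ^ 7 - X) ^ 6 - C ⟨_, hc⟩
  have hPm : P.Monic := by
    simp only [P]
    monicity!
  have hPd : P.natDegree = 42 := by
    simp only [P]
    compute_degree!
  have hPt : aeval t P = 0 := by
    simp [P, IntermediateField.algebraMap_apply]
  have hint : IsIntegral M t := ⟨P, hPm, hPt⟩
  have htopM : M⟮t⟯ = ⊤ := by
    have := htop ((M⟮t⟯).restrictScalars k) (mem_adjoin_simple_self M t) (fun i => by
      have h1 : g i ∈ M := subset_adjoin k _ ⟨i, rfl⟩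
      exact (M⟮t⟯).algebraMap_mem ⟨g i, h1⟩)
    exact restrictScalars_injective k (this.trans (restrictScalars_top (K := k)).symm)
  have hfd : FiniteDimensional M (⊤ : IntermediateField M L) := htopM ▸ adjoin.finiteDimensional hint
  have hfdL : FiniteDimensional M L := topEquiv.toLinearEquiv.finiteDimensional
  have h42 : Module.finrank M L ≤ 42 := by
    rw [← finrank_top', ← htopM, adjoin.finrank hint, ← hPd]
    exact natDegree_le_of_dvd (minpoly.dvd _ _ hPt) hPm.ne_zero
  let alg : Algebra M F := (inclusion hMF).toRingHom.toAlgebra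
  have tow : IsScalarTower M F L := IsScalarTower.of_algebraMap_eq (fun _ => rfl)
  have hfdF : FiniteDimensional F L := Module.Finite.right M F L
  have h42' : 42 ≤ Module.finrank F L := hdeg.trans (minpoly.natDegree_le t)
  have hEq : M = F := eq_of_le_of_finrank_le' hMF (h42.trans h42')
  have halg : Algebra.IsAlgebraic M L := Algebra.IsAlgebraic.of_finite M L
  have halg' : Algebra.IsAlgebraic (Algebra.adjoin k (Set.range g)) L := by
    rw [hM] at halg
    exact (IsFractionRing.comap_isAlgebraic_iff (A := Algebra.adjoin k (Set.range g)) (K := adjoin k (Set.range g)) (C := L)).2 halg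
  have hb : IsTranscendenceBasis k g :=
    Algebra.IsAlgebraic.isTranscendenceBasis_of_lift_le_trdeg_of_finite k g (by
      simpa using htr)
  exact ⟨14, ⟨(equivOfEq hEq.symm).trans hb.1.aevalEquivField.symm⟩⟩

open IntermediateField Polynomial in
theorem degree_ge {k L : Type*} [Field k] [Field L] [Algebra k L] [CharP L 7]
    (S T : L ≃ₐ[k] L) (t : L) (hS : S t = t - 1) (hT : T t = 5 * t)
    (hint : IsIntegral (fixedField (Subgroup.closure {S, T})) t) :
    42 ≤ (minpoly (fixedField (Subgroup.closure {S, T})) t).natDegree := by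
  classical
  set H := Subgroup.closure {S, T} with hH
  set F := fixedField H
  have hSm : S ∈ H := Subgroup.subset_closure (by simp)
  have hTm : T ∈ H := Subgroup.subset_closure (by simp)
  set q := minpoly F t with hq
  have key : ∀ h ∈ H, ∀ y : L, aeval y q = 0 → aeval (h y) q = 0 := by
    intro h hh y hy
    have hfix : ∀ a : F, h (a : L) = a := fun a => a.2 ⟨h, hh⟩
    rw [aeval_eq_sum_range] at hy ⊢
    have := congrArg h hy
    rw [map_sum, map_zero] at this
    rw [← this]
    refine Finset.sum_congr rfl fun i _ => ?_
    rw [Algebra.smul_def, Algebra.smul_def, map_mul, map_pow]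
    congr 1
    exact (hfix _).symm
  have hTi : ∀ m : ℕ, aeval (5 ^ m * t) q = 0 := by
    intro m
    induction m with
    | zero => rw [pow_zero, one_mul]; exact minpoly.aeval F t
    | succ m ih =>
      have := key T hTm _ ih
      rw [map_mul, map_pow, hT, map_ofNat] at this
      rw [pow_succ, mul_assoc]; exact this
  have hSi : ∀ n m : ℕ, aeval (5 ^ m * (t - n)) q = 0 := by
    intro n m
    induction n with
    | zero => simpa using hTi m
    | succ n ih =>
      have := key S hSm _ ih
      rw [map_mul, map_pow, map_sub, hS, map_ofNat, map_natCast] at this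
      rw [Nat.cast_succ, add_comm, ← sub_sub]; exact this
  let f : Fin 6 × Fin 7 → L := fun p => 5 ^ (p.1 : ℕ) * (t - (p.2 : ℕ))
  have h5 : (5 : L) ≠ 0 := by
    intro h
    have : ((5 : ℕ) : L) = 0 := by exact_mod_cast h
    rw [CharP.cast_eq_zero_iff L 7] at this
    omega
  have hf : Function.Injective f := by
    rintro ⟨m, n⟩ ⟨m', n'⟩ h
    simp only [f] at h
    have h2 := congrArg S h
    simp only [map_mul, map_pow, map_sub, hS, map_ofNat, map_natCast] at h2
    have h3 : (5 : L) ^ (m : ℕ) = 5 ^ (m' : ℕ) := by linear_combination h - h2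
    have h4 : ((5 ^ (m : ℕ) : ℕ) : L) = ((5 ^ (m' : ℕ) : ℕ) : L) := by exact_mod_cast h3
    rw [CharP.natCast_eq_natCast L 7] at h4
    have h5' : m = m' := by
      clear h h2 h3
      revert m m'
      decide
    subst h5'
    have h6 := mul_left_cancel₀ (pow_ne_zero _ h5) h
    have h7 : ((n : ℕ) : L) = ((n' : ℕ) : L) := by linear_combination -h6
    rw [CharP.natCast_eq_natCast L 7] at h7
    have h8 : n = n' := by
      clear h h2 h3 h6
      revert n n'
      decide
    rw [h8]
  have hq0 : q ≠ 0 := minpoly.ne_zero hint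
  have hsub : Finset.univ.image f ⊆ (q.map (algebraMap F L)).roots.toFinset := by
    intro y hy
    obtain ⟨p, -, rfl⟩ := Finset.mem_image.1 hy
    rw [Multiset.mem_toFinset, mem_roots (by simpa [Polynomial.map_eq_zero] using hq0), IsRoot, eval_map_algebraMap]
    exact hSi _ _
  calc 42 = (Finset.univ.image f).card := by
        rw [Finset.card_image_of_injective _ hf]; simp
    _ ≤ _ := Finset.card_le_card hsub
    _ ≤ _ := Multiset.toFinset_card_le _
    _ ≤ _ := card_roots' _
    _ = _ := natDegree_map _

open IntermediateField in
theorem core {k L : Type*} [Field k] [Field L] [Algebra k L] [CharP L 7]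
    (S T : L ≃ₐ[k] L) (w z : ZMod 7 → L)
    (hSw : ∀ a, S (w a) = w (a + 1)) (hSz : ∀ a, S (z a) = z (a + 1))
    (hTw : ∀ a, T (w a) = w (3 * a)) (hTz : ∀ a, T (z a) = - z (3 * a))
    (hs : ∑ a, w a ≠ 0)
    (htop : ∀ N : IntermediateField k L, (∀ a, w a ∈ N) → (∀ a, z a ∈ N) → N = ⊤)
    (htr : 14 ≤ Algebra.trdeg k L) :
    IsKRational k (fixedField (Subgroup.closure {S, T})) := by
  have h7 : (7 : L) = 0 := by exact_mod_cast CharP.cast_eq_zero L 7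
  let c : ZMod 7 →+* L := ZMod.castHom (dvd_refl 7) L
  have hcfix : ∀ (h : L ≃ₐ[k] L) a, h (c a) = c a := fun h a =>
    congrArg (fun r : ZMod 7 →+* L => r a)
      (Subsingleton.elim ((h : L →+* L).comp c) c)
  have hcmem : ∀ (N : IntermediateField k L) a, c a ∈ N := by
    intro N a
    have : c a = ((a.val : ℕ) : L) := by
      conv_lhs => rw [← ZMod.natCast_zmod_val a]
      exact map_natCast c _
    rw [this]
    exact IntermediateField.natCast_mem N _
  -- reindexing
  have reS : ∀ f : ZMod 7 → L, ∑ a, f (a + 1) = ∑ a, f a := fun f =>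
    Equiv.sum_comp (Equiv.addRight (1 : ZMod 7)) f
  have reT : ∀ f : ZMod 7 → L, ∑ a, f (3 * a) = ∑ a, f a := fun f =>
    Function.Bijective.sum_comp (e := fun a : ZMod 7 => 3 * a) (by decide) f
  have c5 : ∀ a : ZMod 7, c a = 5 * c (3 * a) := by
    intro a
    rw [map_mul, map_ofNat]
    linear_combination (-2 * c a) * h7
  set s0 := ∑ a, w a with hs0
  set s1 := ∑ a, c a * w a with hs1
  set t := s1 / s0 with ht
  have hSs0 : S s0 = s0 := by
    rw [hs0, map_sum]; simp only [hSw]; exact reS w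
  have hTs0 : T s0 = s0 := by
    rw [hs0, map_sum]; simp only [hTw]; exact reT w
  have hSs1 : S s1 = s1 - s0 := by
    rw [hs1, hs0, map_sum, ← Finset.sum_sub_distrib, ← reS (fun a => c a * w a - w a)]
    refine Finset.sum_congr rfl fun a _ => ?_
    rw [map_mul, hSw, hcfix, map_add, map_one]; ring
  have hTs1 : T s1 = 5 * s1 := by
    rw [hs1, map_sum, Finset.mul_sum, ← reT (fun a => 5 * (c a * w a))]
    refine Finset.sum_congr rfl fun a _ => ?_
    rw [map_mul, hTw, hcfix, c5 a]; ring
  have hSt : S t = t - 1 := by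
    rw [ht, map_div₀, hSs1, hSs0]; field_simp
  have hTt : T t = 5 * t := by
    rw [ht, map_div₀, hTs1, hTs0]; ring
  set θ := t ^ 7 - t with hθ
  have hSθ : S θ = θ := by
    rw [hθ, map_sub, map_pow, hSt]
    linear_combination (-t^6+3*t^5-5*t^4+5*t^3-3*t^2+t) * h7
  have hTθ : T θ = 5 * θ := by
    rw [hθ, map_sub, map_pow, hTt]
    linear_combination (11160 * t ^ 7) * h7
  have htne : ∀ n : ℕ, t - n ≠ 0 := by
    intro n h
    have h1 := congrArg S h
    rw [map_sub, hSt, map_natCast, map_zero] at h1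
    exact one_ne_zero (α := L) (by linear_combination h - h1)
  have hθ0 : θ ≠ 0 := by
    have : θ = (t - (0 : ℕ)) * (t - (1 : ℕ)) * (t - (2 : ℕ)) * (t - (3 : ℕ)) * (t - (4 : ℕ))
        * (t - (5 : ℕ)) * (t - (6 : ℕ)) := by
      rw [hθ]; push_cast
      linear_combination (3*t^6 - 25*t^5 + 105*t^4 - 232*t^3 + 252*t^2 - 103 * t) * h7
    rw [this]
    simp only [mul_ne_zero_iff]
    exact ⟨⟨⟨⟨⟨⟨htne 0, htne 1⟩, htne 2⟩, htne 3⟩, htne 4⟩, htne 5⟩, htne 6⟩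
  let Q : (ZMod 7 → L) → ℕ → L := fun y j => ∑ a, (c a - t) ^ j * y a
  have hSQ : ∀ y : ZMod 7 → L, (∀ a, S (y a) = y (a + 1)) → ∀ j, S (Q y j) = Q y j := by
    intro y hy j
    simp only [Q]
    rw [map_sum, ← reS (fun a => (c a - t) ^ j * y a)]
    refine Finset.sum_congr rfl fun a _ => ?_
    rw [map_mul, map_pow, map_sub, hcfix, hSt, hy, map_add, map_one]
    ring
  have hTQ : ∀ (y : ZMod 7 → L) (e : L), (∀ a, T (y a) = e * y (3 * a)) →
      ∀ j, T (Q y j) = e * 5 ^ j * Q y j := by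
    intro y e hy j
    simp only [Q]
    rw [map_sum, Finset.mul_sum, ← reT (fun a => e * 5 ^ j * ((c a - t) ^ j * y a))]
    refine Finset.sum_congr rfl fun a _ => ?_
    rw [map_mul, map_pow, map_sub, hcfix, hTt, hy, c5 a, ← mul_sub, mul_pow]
    ring
  have hrec : ∀ (y : ZMod 7 → L) b, y b = Q y 0 - ∑ j ∈ Finset.range 7, (c b - t) ^ (6 - j) * Q y j := by
    intro y b
    have hd : ∀ a b : ZMod 7, 1 - (a - b) ^ 6 = if a = b then 1 else 0 := by decide
    have h1 : y b = ∑ a, c (1 - (a - b) ^ 6) * y a := by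
      simp [hd, apply_ite c]
    rw [h1]
    simp only [Q, Finset.mul_sum]
    rw [Finset.sum_comm, ← Finset.sum_sub_distrib]
    refine Finset.sum_congr rfl fun a _ => ?_
    simp only [Finset.sum_range_succ, Finset.sum_range_zero, map_sub, map_one, map_pow]
    generalize c a = A
    generalize hB : c b = B
    obtain ⟨A, rfl⟩ : ∃ A', A = A' + t := ⟨A - t, by ring⟩
    obtain ⟨B, rfl⟩ : ∃ B', B = B' + t := ⟨B - t, by ring⟩
    simp only [add_sub_cancel_right, add_sub_add_right_eq_sub]
    linear_combination (A^5*B - 2*A^4*B^2 + 3*A^3*B^3 - 2*A^2*B^4 + A*B^5) * y a * h7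
  have hQ1 : Q w 1 = 0 := by
    have : Q w 1 = s1 - t * s0 := by
      simp only [Q, pow_one, sub_mul, Finset.sum_sub_distrib, ← Finset.mul_sum, hs1, hs0]
    rw [this, ht]; field_simp; ring
  have h5 : (5 : L) ≠ 0 := by
    intro h
    exact one_ne_zero (α := L) (by linear_combination 3 * h - 2 * h7)
  let g0 : Fin 7 ⊕ Fin 7 → L := Sum.elim
    (fun j => if j = 1 then θ ^ 6 else Q w j / θ ^ (j : ℕ))
    (fun j => Q z j / θ ^ ((j : ℕ) + 3))
  let g : Fin 14 → L := fun i => g0 ((finSumFinEquiv (m := 7) (n := 7)).symm i)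
  have hg0 : ∀ i, g0 i = g (finSumFinEquiv (m := 7) (n := 7) i) := by
    intro i; simp only [g, Equiv.symm_apply_apply]
  have hSg : ∀ i, S (g0 i) = g0 i := by
    rintro (j | j)
    · simp only [g0, Sum.elim_inl]
      split_ifs
      · rw [map_pow, hSθ]
      · rw [map_div₀, map_pow, hSθ, hSQ w hSw]
    · simp only [g0, Sum.elim_inr]
      rw [map_div₀, map_pow, hSθ, hSQ z hSz]
  have hTg : ∀ i, T (g0 i) = g0 i := by
    rintro (j | j)
    · simp only [g0, Sum.elim_inl]
      split_ifs
      · rw [map_pow, hTθ]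
        linear_combination (2232 * θ ^ 6) * h7
      · rw [map_div₀, map_pow, hTθ, hTQ w 1 (by simpa using hTw), mul_pow, one_mul]
        rw [mul_div_mul_left _ _ (pow_ne_zero _ h5)]
    · simp only [g0, Sum.elim_inr]
      rw [map_div₀, map_pow, hTθ, hTQ z (-1) (by simpa using hTz), mul_pow]
      have : (-1 : L) * 5 ^ (j : ℕ) = 5 ^ ((j : ℕ) + 3) := by
        rw [pow_add]
        linear_combination (-18 * 5 ^ (j : ℕ)) * h7
      rw [this, mul_div_mul_left _ _ (pow_ne_zero _ h5)]
  have hgF : ∀ i, g i ∈ fixedField (Subgroup.closure {S, T}) := by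
    intro i
    rintro ⟨h, hh⟩
    change h (g i) = g i
    induction hh using Subgroup.closure_induction with
    | mem y hy =>
      rcases hy with rfl | rfl
      · exact hSg _
      · exact hTg _
    | one => rfl
    | mul a b _ _ ha hb => rw [AlgEquiv.mul_apply, hb, ha]
    | inv a _ ha =>
      conv_lhs => rw [← ha]
      exact a.symm_apply_apply _
  have hθmem : θ ^ 6 = g (finSumFinEquiv (m := 7) (n := 7) (Sum.inl 1)) := by
    rw [← hg0]; simp [g0]
  refine rational_of_gens _ g hgF t ?_ ?_ ?_ htr
  · rw [← hθ, hθmem]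
    exact subset_adjoin k _ ⟨_, rfl⟩
  · intro N htN hgN
    have hθN : θ ∈ N := sub_mem (pow_mem htN 7) htN
    have hQw : ∀ j < 7, Q w j ∈ N := by
      intro j hj
      by_cases h1 : j = 1
      · rw [h1, hQ1]; exact zero_mem N
      · have h2 := hgN (finSumFinEquiv (m := 7) (n := 7) (Sum.inl ⟨j, hj⟩))
        have h1' : ¬ ((⟨j, hj⟩ : Fin 7) = 1) := fun h => h1 (congrArg Fin.val h)
        rw [← hg0] at h2
        simp only [g0, Sum.elim_inl, if_neg h1'] at h2
        have := mul_mem h2 (pow_mem hθN j)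
        rwa [div_mul_cancel₀ _ (pow_ne_zero _ hθ0)] at this
    have hQz : ∀ j < 7, Q z j ∈ N := by
      intro j hj
      have h2 := hgN (finSumFinEquiv (m := 7) (n := 7) (Sum.inr ⟨j, hj⟩))
      rw [← hg0] at h2
      simp only [g0, Sum.elim_inr] at h2
      have := mul_mem h2 (pow_mem hθN (j + 3))
      rwa [div_mul_cancel₀ _ (pow_ne_zero _ hθ0)] at this
    have hy : ∀ y : ZMod 7 → L, (∀ j < 7, Q y j ∈ N) → ∀ a, y a ∈ N := by
      intro y hy a
      rw [hrec y a]
      refine sub_mem (hy 0 (by norm_num)) (sum_mem fun j hj => ?_)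
      exact mul_mem (pow_mem (sub_mem (hcmem N a) htN) _) (hy j (Finset.mem_range.1 hj))
    exact htop N (hy w hQw) (hy z hQz)
  · refine degree_ge S T t hSt hTt ?_
    let P : Polynomial (fixedField (Subgroup.closure {S, T})) :=
      (Polynomial.X ^ 7 - Polynomial.X) ^ 6 - Polynomial.C ⟨_, hgF (finSumFinEquiv (m := 7) (n := 7) (Sum.inl 1))⟩
    refine ⟨P, ?_, ?_⟩
    · simp only [P]; monicity!
    · change Polynomial.aeval t P = 0
      simp [P, IntermediateField.algebraMap_apply, ← hθmem, hθ]


theorem perm_case {k L : Type*} [Field k] [Field L] [Algebra k L] [CharP L 7]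
    (x : Fin 14 → L) (S T : L ≃ₐ[k] L)
    (hS : ∀ i : Fin 14, S (x i) = x (i + 2))
    (hT : ∀ i : Fin 14,
      T (x i) = x (![1, 0, 7, 6, 13, 12, 5, 4, 11, 10, 3, 2, 9, 8] i))
    (hxg : ∀ N : IntermediateField k L, (∀ i, x i ∈ N) → N = ⊤)
    (htr : 14 ≤ Algebra.trdeg k L) (hsum : ∑ i, x i ≠ 0) :
    IsKRational k (IntermediateField.fixedField (Subgroup.closure {S, T})) := by
  have h7 : (7 : L) = 0 := by exact_mod_cast CharP.cast_eq_zero L 7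
  let e : ZMod 7 → Fin 14 := ![0, 2, 4, 6, 8, 10, 12]
  let o : ZMod 7 → Fin 14 := ![1, 3, 5, 7, 9, 11, 13]
  have e1 : ∀ a, e a + 2 = e (a + 1) := by decide
  have o1 : ∀ a, o a + 2 = o (a + 1) := by decide
  have e3 : ∀ a, ![1, 0, 7, 6, 13, 12, 5, 4, 11, 10, 3, 2, 9, 8] (e a) = o (3 * a) := by decide
  have o3 : ∀ a, ![1, 0, 7, 6, 13, 12, 5, 4, 11, 10, 3, 2, 9, 8] (o a) = e (3 * a) := by decide
  have hcov : ∀ i : Fin 14, (∃ a, i = e a) ∨ (∃ a, i = o a) := by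
    change ∀ i : Fin 14, (∃ a : Fin 7, i = e a) ∨ (∃ a : Fin 7, i = o a)
    decide
  refine core S T (fun a => x (e a) + x (o a)) (fun a => x (e a) - x (o a)) ?_ ?_ ?_ ?_ ?_ ?_ htr
  · intro a
    rw [map_add, hS, hS, e1, o1]
  · intro a
    rw [map_sub, hS, hS, e1, o1]
  · intro a
    rw [map_add, hT, hT, e3, o3, add_comm]
  · intro a
    rw [map_sub, hT, hT, e3, o3, neg_sub]
  · convert hsum using 1
    change ∑ a : Fin 7, (x (e a) + x (o a)) = _
    simp only [Fin.sum_univ_succ, e, o]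
    simp
    ring_nf
  · intro N hw hz
    apply hxg
    have h4 : (4 : L) ∈ N := ofNat_mem N 4
    intro i
    rcases hcov i with ⟨a, rfl⟩ | ⟨a, rfl⟩
    · have := mul_mem h4 (add_mem (hw a) (hz a))
      convert this using 1
      linear_combination (-x (e a)) * h7
    · have := mul_mem h4 (sub_mem (hw a) (hz a))
      convert this using 1
      linear_combination (-x (o a)) * h7

/-- `char k = 7`; with `σ = (1,3,5,…,13)(2,4,…,14)` (i.e. `i ↦ i+2`
on 0-indexed `Fin 14`) and `τ₁ = (1,2)(3,8,5,14,9,12)(4,7,6,13,10,11)` acting on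
`k(x₁,…,x₁₄)` by permuting variables, and `G := ⟨σ, τ₁⟩` (a transitive solvable
subgroup of `S₁₄` of order 42), the fixed field `k(x₁,…,x₁₄)^G` is purely
transcendental over `k`. -/
theorem stmt18 (k : Type*) [Field k] [CharP k 7]
    (x : Fin 14 → FractionRing (MvPolynomial (Fin 14) k))
    (hx : ∀ i, x i = algebraMap (MvPolynomial (Fin 14) k)
      (FractionRing (MvPolynomial (Fin 14) k)) (MvPolynomial.X i))
    (S T : FractionRing (MvPolynomial (Fin 14) k) ≃ₐ[k]
           FractionRing (MvPolynomial (Fin 14) k))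
    (hS : ∀ i : Fin 14, S (x i) = x (i + 2))
    (hT : ∀ i : Fin 14,
      T (x i) = x (![1, 0, 7, 6, 13, 12, 5, 4, 11, 10, 3, 2, 9, 8] i)) :
    IsKRational k (IntermediateField.fixedField (Subgroup.closure {S, T})) := by
  have hxg : ∀ N : IntermediateField k (FractionRing (MvPolynomial (Fin 14) k)),
      (∀ i, x i ∈ N) → N = ⊤ := by
    intro N hN
    have hpoly : ∀ p : MvPolynomial (Fin 14) k,
        algebraMap _ (FractionRing (MvPolynomial (Fin 14) k)) p ∈ N := by
      intro p
      induction p using MvPolynomial.induction_on with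
      | C a => exact N.algebraMap_mem a
      | add p q hp hq => rw [map_add]; exact add_mem hp hq
      | mul_X p i hp => rw [map_mul, ← hx]; exact mul_mem hp (hN i)
    rw [eq_top_iff]
    intro y _
    obtain ⟨p, q, -, rfl⟩ := IsFractionRing.div_surjective (A := MvPolynomial (Fin 14) k) y
    exact div_mem (hpoly p) (hpoly q)
  have htr : 14 ≤ Algebra.trdeg k (FractionRing (MvPolynomial (Fin 14) k)) := by
    have h := trdeg_le_of_injective
      (IsScalarTower.toAlgHom k (MvPolynomial (Fin 14) k) (FractionRing (MvPolynomial (Fin 14) k)))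
      (IsFractionRing.injective _ _)
    simpa using h
  have hsum : ∑ i, x i ≠ 0 := by
    simp only [hx, ← map_sum]
    intro h
    rw [map_eq_zero_iff _ (IsFractionRing.injective _ _)] at h
    have h2 := congrArg (MvPolynomial.eval (fun i : Fin 14 => if i = 0 then (1 : k) else 0)) h
    simp [Finset.sum_ite_eq'] at h2
  have : CharP (FractionRing (MvPolynomial (Fin 14) k)) 7 :=
    charP_of_injective_algebraMap (algebraMap k _).injective 7
  exact perm_case x S T hS hT hxg htr hsum
end
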